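/- arXiv:2008.01256 — 2 statements merged into one kernel-verified Lean document; each statement's English description precedes it below -/
import Mathlib

section
/- Suppose that a linear functional L* on ℝ[x] is nonnegative on the quadratic module generated by a set G of polynomials whose quadratic module is Archimedean, L*(g) = 1 and L*(g - g*) ≥ 0 for some polynomial g and constant g* > 0, and L*(p(x,y)) ≤ 0 as a polynomial in y for all y ∈ Y, L*(ψ_j) ≤ 0 for j = 1,...,s. Then L* admits a representing nonnegative Borel measure ν on ℝ^m with ∫ dν > 0, and the point (∫x_1dν, ..., ∫x_m dν)/(∫dν) belongs to the feasible set K = {x : ψ_j(x) ≤ 0 ∀j, p(x,y) ≤ 0 ∀y ∈ Y}, provided ψ_j and p(·,y) are convex for all j and y ∈ Y. -/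
open MvPolynomial MeasureTheory

/-- The quadratic module generated by a finite family `G` of polynomials. -/
def QuadraticModule {m κ : ℕ} (G : Fin κ → MvPolynomial (Fin m) ℝ) :
    Set (MvPolynomial (Fin m) ℝ) :=
  {q | ∃ (σ0 : MvPolynomial (Fin m) ℝ) (σ : Fin κ → MvPolynomial (Fin m) ℝ),
    IsSumSq σ0 ∧ (∀ j, IsSumSq (σ j)) ∧ q = σ0 + ∑ j, σ j * G j}

section PositiveFunctional

variable {A : Type*} [CommRing A] [Algebra ℝ A]

/-- Cauchy–Schwarz for a linear functional that is nonnegative on squares. -/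
lemma sq_map_mul_le_of_map_sq_nonneg (L : A →ₗ[ℝ] ℝ) (hL : ∀ q, 0 ≤ L (q ^ 2)) (a b : A) :
    L (a * b) ^ 2 ≤ L (a ^ 2) * L (b ^ 2) := by
  have h : ∀ t : ℝ, 0 ≤ L (a ^ 2) * (t * t) + (2 * L (a * b)) * t + L (b ^ 2) := by
    intro t
    have h1 := hL (t • a + b)
    have h2 : (t • a + b) ^ 2 = (t * t) • a ^ 2 + (2 * t) • (a * b) + b ^ 2 := by
      simp only [Algebra.smul_def, map_mul, map_ofNat]
      ring
    rw [h2, map_add, map_add, map_smul, map_smul, smul_eq_mul, smul_eq_mul] at h1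
    linarith
  have := discrim_le_zero h
  rw [discrim] at this
  nlinarith

/-- The elements `f` such that `L (q ^ 2 * f) ≥ 0` for every `q`. -/
def localizingCone (L : A →ₗ[ℝ] ℝ) : PointedCone ℝ A where
  carrier := {f | ∀ q, 0 ≤ L (q ^ 2 * f)}
  add_mem' hf hg q := by
    rw [mul_add, map_add]
    exact add_nonneg (hf q) (hg q)
  zero_mem' q := by simp
  smul_mem' c f hf q := by
    rw [← Nonneg.coe_smul, mul_smul_comm, map_smul]
    exact mul_nonneg c.2 (hf q)

lemma mem_localizingCone {L : A →ₗ[ℝ] ℝ} {f : A} :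
    f ∈ localizingCone L ↔ ∀ q, 0 ≤ L (q ^ 2 * f) := Iff.rfl

lemma sq_mul_mem_localizingCone {L : A →ₗ[ℝ] ℝ} {f : A} (hf : f ∈ localizingCone L) (r : A) :
    r ^ 2 * f ∈ localizingCone L := fun q => by
  simpa only [mul_pow, mul_assoc] using hf (q * r)

lemma sub_sq_mem_localizingCone {L : A →ₗ[ℝ] ℝ} {a : A} (ha : a ∈ localizingCone L)
    (ha' : 1 - a ∈ localizingCone L) : a - a ^ 2 ∈ localizingCone L := by
  have := add_mem (sq_mul_mem_localizingCone ha' a) (sq_mul_mem_localizingCone ha (1 - a))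
  convert this using 1
  ring

/-- The algebraic substitute for a square root: iterating `a ↦ a - a ^ 2` writes `a` as a sum of
squares up to an error that is small in the seminorm of `L`. -/
lemma map_mul_nonneg_of_mem_localizingCone {L : A →ₗ[ℝ] ℝ} (hL : ∀ q, 0 ≤ L (q ^ 2)) {a b : A}
    (ha : a ∈ localizingCone L) (ha' : 1 - a ∈ localizingCone L) (hb : b ∈ localizingCone L) :
    0 ≤ L (a * b) := by
  let u : ℕ → A := fun n => (fun x => x - x ^ 2)^[n] a
  have hu : ∀ n, u (n + 1) = u n - u n ^ 2 := fun n => Function.iterate_succ_apply' _ _ _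
  have hmem : ∀ n, u n ∈ localizingCone L ∧ 1 - u n ∈ localizingCone L := by
    intro n
    induction n with
    | zero => exact ⟨ha, ha'⟩
    | succ n ih =>
      rw [hu]
      refine ⟨sub_sq_mem_localizingCone ih.1 ih.2, ?_⟩
      rw [← sub_add]
      refine add_mem ih.2 fun q => ?_
      rw [← mul_pow]
      exact hL _
  have hsum : ∀ n, ∑ k ∈ Finset.range n, L (u k ^ 2) = L (u 0) - L (u n) := by
    intro n
    rw [← Finset.sum_range_sub' (fun k => L (u k))]
    refine Finset.sum_congr rfl fun k _ => ?_
    rw [hu, map_sub]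
    ring
  have hlim : Filter.Tendsto (fun n => L (u n ^ 2)) Filter.atTop (nhds 0) := by
    refine (summable_of_sum_range_le (c := L (u 0)) (fun n => hL _) fun n => ?_).tendsto_atTop_zero
    rw [hsum]
    have := (hmem n).1 1
    rw [one_pow, one_mul] at this
    linarith
  have hlim' : Filter.Tendsto (fun n => L (u n * b)) Filter.atTop (nhds 0) := by
    refine squeeze_zero_norm (a := fun n => √(L (u n ^ 2) * L (b ^ 2))) (fun n => ?_) ?_
    · exact Real.abs_le_sqrt (sq_map_mul_le_of_map_sq_nonneg L hL _ _)
    · simpa using (hlim.mul_const (L (b ^ 2))).sqrt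
  refine le_of_tendsto' hlim' fun n => ?_
  induction n with
  | zero => exact le_rfl
  | succ n ih =>
    refine le_trans ?_ ih
    rw [hu, sub_mul, map_sub]
    linarith [hb (u n)]

lemma mul_mem_localizingCone_of_one_sub_mem {L : A →ₗ[ℝ] ℝ} (hL : ∀ q, 0 ≤ L (q ^ 2)) {a b : A}
    (ha : a ∈ localizingCone L) (ha' : 1 - a ∈ localizingCone L) (hb : b ∈ localizingCone L) :
    a * b ∈ localizingCone L := by
  intro r
  have hsub : ∀ f ∈ localizingCone L,
      f ∈ localizingCone (L ∘ₗ LinearMap.mulLeft ℝ (r ^ 2)) := fun f hf q => by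
    simpa [mul_pow, mul_assoc] using hf (r * q)
  exact map_mul_nonneg_of_mem_localizingCone (L := L ∘ₗ LinearMap.mulLeft ℝ (r ^ 2))
    (fun q => by simpa [mul_pow] using hL (r * q)) (hsub _ ha) (hsub _ ha') (hsub _ hb)

/-- The elements of `A` bounded above and below by constants with respect to the cone `P`. -/
def IsBoundedWrt (P : PointedCone ℝ A) (f : A) : Prop :=
  ∃ c : ℝ, 0 < c ∧ algebraMap ℝ A c + f ∈ P ∧ algebraMap ℝ A c - f ∈ P

lemma PointedCone.algebraMap_mem (P : PointedCone ℝ A) (h1 : (1 : A) ∈ P) {c : ℝ} (hc : 0 ≤ c) :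
    algebraMap ℝ A c ∈ P := by
  rw [Algebra.algebraMap_eq_smul_one]
  exact P.smul_mem hc h1

lemma one_mem_localizingCone {L : A →ₗ[ℝ] ℝ} (hL : ∀ q, 0 ≤ L (q ^ 2)) :
    (1 : A) ∈ localizingCone L := fun q => by simpa using hL q

lemma mul_mem_localizingCone {L : A →ₗ[ℝ] ℝ} (hL : ∀ q, 0 ≤ L (q ^ 2)) {a b : A}
    (ha : a ∈ localizingCone L) (hbdd : IsBoundedWrt (localizingCone L) a)
    (hb : b ∈ localizingCone L) : a * b ∈ localizingCone L := by
  obtain ⟨c, hc, -, h⟩ := hbdd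
  have h1 : 1 - c⁻¹ • a ∈ localizingCone L := by
    have := (localizingCone L).smul_mem (inv_nonneg.2 hc.le) h
    rwa [smul_sub, Algebra.algebraMap_eq_smul_one, smul_smul, inv_mul_cancel₀ hc.ne',
      one_smul] at this
  have h2 := mul_mem_localizingCone_of_one_sub_mem hL
    ((localizingCone L).smul_mem (inv_nonneg.2 hc.le) ha) h1 hb
  have h3 := (localizingCone L).smul_mem hc.le h2
  rwa [smul_mul_assoc, smul_smul, mul_inv_cancel₀ hc.ne', one_smul] at h3

lemma isBoundedWrt_algebraMap {P : PointedCone ℝ A} (h1 : (1 : A) ∈ P) (r : ℝ) :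
    IsBoundedWrt P (algebraMap ℝ A r) := by
  refine ⟨|r| + 1, by positivity, ?_, ?_⟩
  · rw [← map_add]
    exact P.algebraMap_mem h1 (by linarith [neg_abs_le r])
  · rw [← map_sub]
    exact P.algebraMap_mem h1 (by linarith [le_abs_self r])

lemma IsBoundedWrt.add {P : PointedCone ℝ A} {f g : A} (hf : IsBoundedWrt P f)
    (hg : IsBoundedWrt P g) : IsBoundedWrt P (f + g) := by
  obtain ⟨c, hc, hc1, hc2⟩ := hf
  obtain ⟨d, hd, hd1, hd2⟩ := hg
  refine ⟨c + d, by positivity, ?_, ?_⟩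
  · convert add_mem hc1 hd1 using 1
    rw [map_add]
    ring
  · convert add_mem hc2 hd2 using 1
    rw [map_add]
    ring

lemma IsBoundedWrt.algebraMap_add {P : PointedCone ℝ A} (h1 : (1 : A) ∈ P) {f : A}
    (hf : IsBoundedWrt P f) (r : ℝ) : IsBoundedWrt P (algebraMap ℝ A r + f) :=
  (isBoundedWrt_algebraMap h1 r).add hf

lemma IsBoundedWrt.neg {P : PointedCone ℝ A} {f : A} (hf : IsBoundedWrt P f) :
    IsBoundedWrt P (-f) := by
  obtain ⟨c, hc, hc1, hc2⟩ := hf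
  exact ⟨c, hc, by rwa [← sub_eq_add_neg], by rwa [sub_neg_eq_add]⟩

lemma IsBoundedWrt.mul {L : A →ₗ[ℝ] ℝ} (hL : ∀ q, 0 ≤ L (q ^ 2)) {f g : A}
    (hf : IsBoundedWrt (localizingCone L) f) (hg : IsBoundedWrt (localizingCone L) g) :
    IsBoundedWrt (localizingCone L) (f * g) := by
  have h1 := one_mem_localizingCone hL
  obtain ⟨c, hc, hc1, hc2⟩ := id hf
  obtain ⟨d, hd, hd1, hd2⟩ := id hg
  have hbp := hf.algebraMap_add h1 c
  have hbm : IsBoundedWrt (localizingCone L) (algebraMap ℝ A c - f) := by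
    rw [sub_eq_add_neg]
    exact hf.neg.algebraMap_add h1 c
  have half : ∀ x : A, (1 / 2 : ℝ) • (2 * x) = x := fun x => by
    rw [← map_ofNat (algebraMap ℝ A) 2, ← Algebra.smul_def, smul_smul]
    norm_num
  refine ⟨c * d, by positivity, ?_, ?_⟩
  · have := (localizingCone L).smul_mem (one_half_pos (α := ℝ)).le
      (add_mem (mul_mem_localizingCone hL hc1 hbp hd1)
      (mul_mem_localizingCone hL hc2 hbm hd2))
    convert this using 1
    rw [← half (_ + _), map_mul]
    ring_nf
  · have := (localizingCone L).smul_mem (one_half_pos (α := ℝ)).le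
      (add_mem (mul_mem_localizingCone hL hc1 hbp hd2)
      (mul_mem_localizingCone hL hc2 hbm hd1))
    convert this using 1
    rw [← half (_ - _), map_mul]
    ring_nf

/-- The states of `A` that are nonnegative on the cone `P`. -/
def coneStates (P : PointedCone ℝ A) : Set (A → ℝ) :=
  {ℓ | (∀ a b, ℓ (a + b) = ℓ a + ℓ b) ∧ (∀ (c : ℝ) a, ℓ (c • a) = c * ℓ a) ∧ ℓ 1 = 1 ∧
    ∀ a ∈ P, 0 ≤ ℓ a}

lemma isCompact_coneStates {P : PointedCone ℝ A} (hP : ∀ f, IsBoundedWrt P f) :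
    IsCompact (coneStates P) := by
  choose c hc hc1 hc2 using hP
  refine (isCompact_univ_pi fun f => isCompact_Icc (a := -c f) (b := c f)).of_isClosed_subset ?_ ?_
  · simp only [coneStates, Set.ofPred_and, Set.ofPred_forall]
    refine IsClosed.inter ?_ (IsClosed.inter ?_ (IsClosed.inter ?_ ?_))
    · exact isClosed_iInter fun a => isClosed_iInter fun b =>
        isClosed_eq (by fun_prop) (by fun_prop)
    · exact isClosed_iInter fun a => isClosed_iInter fun b =>
        isClosed_eq (by fun_prop) (by fun_prop)
    · exact isClosed_eq (by fun_prop) (by fun_prop)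
    · exact isClosed_iInter fun a => isClosed_iInter fun _ =>
        isClosed_le (by fun_prop) (by fun_prop)
  · rintro ℓ ⟨hadd, hsmul, hone, hpos⟩ f -
    have hconst : ∀ r : ℝ, ℓ (algebraMap ℝ A r) = r := fun r => by
      rw [Algebra.algebraMap_eq_smul_one, hsmul, hone, mul_one]
    have h1 := hpos _ (hc1 f)
    have h2 := hpos _ (hc2 f)
    rw [hadd, hconst] at h1
    rw [sub_eq_add_neg, ← neg_one_smul ℝ, hadd, hsmul, hconst] at h2
    constructor <;> linarith

/-- An extreme state of a multiplicatively closed cone with order unit is multiplicative. -/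
lemma map_mul_of_mem_extremePoints_coneStates {P : PointedCone ℝ A}
    (hP : ∀ f, IsBoundedWrt P f) (h1 : (1 : A) ∈ P) (hmul : ∀ a ∈ P, ∀ b ∈ P, a * b ∈ P)
    {ℓ : A → ℝ} (hℓ : ℓ ∈ (coneStates P).extremePoints ℝ) (f h : A) :
    ℓ (f * h) = ℓ f * ℓ h := by
  obtain ⟨⟨hadd, hsmul, hone, hpos⟩, hext⟩ := hℓ
  have hconst : ∀ r : ℝ, ℓ (algebraMap ℝ A r) = r := fun r => by
    rw [Algebra.algebraMap_eq_smul_one, hsmul, hone, mul_one]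
  have hstate : ∀ a ∈ P, 0 < ℓ a → (fun x => (ℓ a)⁻¹ * ℓ (a * x)) ∈ coneStates P := by
    intro a ha hpa
    refine ⟨fun x y => ?_, fun r x => ?_, ?_, fun x hx => ?_⟩
    · simp only [mul_add, hadd]
    · simp only [mul_smul_comm, hsmul]
      ring
    · simp only [mul_one]
      exact inv_mul_cancel₀ hpa.ne'
    · exact mul_nonneg (inv_nonneg.2 hpa.le) (hpos _ (hmul _ ha _ hx))
  obtain ⟨c, hc, hc1, hc2⟩ := hP f
  have hneg : ∀ x, ℓ (-x) = -ℓ x := fun x => by rw [← neg_one_smul ℝ, hsmul]; ring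
  have e1 : ℓ (algebraMap ℝ A (c + 1) + f) = c + 1 + ℓ f := by rw [hadd, hconst]
  have e2 : ℓ (algebraMap ℝ A (c + 1) - f) = c + 1 - ℓ f := by
    rw [sub_eq_add_neg, hadd, hconst, hneg]; ring
  have b1 := hpos _ hc1
  have b2 := hpos _ hc2
  rw [hadd, hconst] at b1
  rw [sub_eq_add_neg, hadd, hconst, hneg] at b2
  have m1 : algebraMap ℝ A (c + 1) + f ∈ P := by
    convert add_mem hc1 h1 using 1
    rw [map_add, map_one]
    ring
  have m2 : algebraMap ℝ A (c + 1) - f ∈ P := by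
    convert add_mem hc2 h1 using 1
    rw [map_add, map_one]
    ring
  have p1 : 0 < c + 1 + ℓ f := by linarith
  have p2 : 0 < c + 1 - ℓ f := by linarith
  have s1 := hstate _ m1 (by rwa [e1])
  have s2 := hstate _ m2 (by rwa [e2])
  rw [e1] at s1
  rw [e2] at s2
  have x1 : ∀ x, ℓ ((algebraMap ℝ A (c + 1) + f) * x) = (c + 1) * ℓ x + ℓ (f * x) := fun x => by
    rw [add_mul, hadd, ← Algebra.smul_def, hsmul]
  have x2 : ∀ x, ℓ ((algebraMap ℝ A (c + 1) - f) * x) = (c + 1) * ℓ x - ℓ (f * x) := fun x => by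
    rw [sub_mul, sub_eq_add_neg, hadd, ← Algebra.smul_def, hsmul, hneg]; ring
  have key := hext s1 s2 ⟨(c + 1 + ℓ f) / (2 * (c + 1)), (c + 1 - ℓ f) / (2 * (c + 1)),
    by positivity, by positivity, by field_simp; ring, by
      ext x
      simp only [Pi.add_apply, Pi.smul_apply, smul_eq_mul, x1, x2]
      field_simp
      ring⟩
  have := congrFun key h
  simp only [x1] at this
  field_simp at this
  linarith

/-- **Kadison–Dubois**: on an Archimedean multiplicatively closed cone every state dominates, at
any given element, a character that is nonnegative on the cone. -/
lemma exists_algHom_le_of_state {P : PointedCone ℝ A}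
    (hP : ∀ f, IsBoundedWrt P f) (h1 : (1 : A) ∈ P) (hmul : ∀ a ∈ P, ∀ b ∈ P, a * b ∈ P)
    (L : A →ₗ[ℝ] ℝ) (hL1 : L 1 = 1) (hL : ∀ a ∈ P, 0 ≤ L a) (f : A) :
    ∃ φ : A →ₐ[ℝ] ℝ, (∀ a ∈ P, 0 ≤ φ a) ∧ φ f ≤ L f := by
  have hcomp := isCompact_coneStates hP
  have hLmem : (L : A → ℝ) ∈ coneStates P :=
    ⟨map_add L, fun c a => by simp, hL1, hL⟩
  let e : StrongDual ℝ (A → ℝ) := -ContinuousLinearMap.proj f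
  have hexp := ContinuousLinearMap.toExposed.isExposed (l := e) (A := coneStates P)
  obtain ⟨ℓ₀, hℓ₀, hmin⟩ := hcomp.exists_isMaxOn ⟨_, hLmem⟩ e.continuous.continuousOn
  obtain ⟨ℓ, hℓ⟩ := (hexp.isCompact hcomp).extremePoints_nonempty ⟨ℓ₀, hℓ₀, hmin⟩
  have hle : ℓ f ≤ L f := by
    have := hℓ.1.2 _ hLmem
    simpa [e] using this
  have hℓ' := hexp.isExtreme.extremePoints_subset_extremePoints hℓ
  obtain ⟨hadd, hsmul, hone, hpos⟩ := hℓ'.1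
  refine ⟨AlgHom.ofLinearMap ⟨⟨ℓ, hadd⟩, hsmul⟩ hone
    (map_mul_of_mem_extremePoints_coneStates hP h1 hmul hℓ'), hpos, hle⟩

end PositiveFunctional

section Haviland

/-- Restriction of polynomials to a set, as continuous functions. -/
noncomputable def restrictToSet {m : ℕ} (K : Set (Fin m → ℝ)) :
    MvPolynomial (Fin m) ℝ →ₗ[ℝ] C(K, ℝ) where
  toFun q := ⟨fun x => eval (x : Fin m → ℝ) q,
    (MvPolynomial.continuous_eval q).comp continuous_subtype_val⟩
  map_add' q r := by ext; simp
  map_smul' c q := by ext; simp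

/-- **Haviland's theorem** for a compact set. -/
lemma exists_measure_of_nonneg_on_compact {m : ℕ} {K : Set (Fin m → ℝ)} (hK : IsCompact K)
    (L : MvPolynomial (Fin m) ℝ →ₗ[ℝ] ℝ)
    (hL : ∀ q, (∀ x ∈ K, 0 ≤ eval x q) → 0 ≤ L q) :
    ∃ ν : Measure (Fin m → ℝ), IsFiniteMeasure ν ∧
      (∀ q : MvPolynomial (Fin m) ℝ, Integrable (fun x => eval x q) ν) ∧
      (∀ q : MvPolynomial (Fin m) ℝ, L q = ∫ x, eval x q ∂ν) := by
  have : CompactSpace K := isCompact_iff_compactSpace.1 hK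
  let r := restrictToSet K
  have hr : ∀ q (x : K), r q x = eval (x : Fin m → ℝ) q := fun _ _ => rfl
  obtain ⟨σ, hσ⟩ := r.rangeRestrict.exists_rightInverse_of_surjective r.range_rangeRestrict
  have hσ' : ∀ y : r.range, r (σ y) = y := fun y =>
    congrArg Subtype.val (LinearMap.congr_fun hσ y)
  let F : C(K, ℝ) →ₗ.[ℝ] ℝ := ⟨r.range, L ∘ₗ σ⟩
  let P : PointedCone ℝ C(K, ℝ) :=
    { carrier := {h | ∀ x, 0 ≤ h x}
      add_mem' := fun ha hb x => add_nonneg (ha x) (hb x)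
      zero_mem' := fun x => le_rfl
      smul_mem' := fun c h hh x => mul_nonneg c.2 (hh x) }
  obtain ⟨Λ, hΛ, hΛP⟩ := riesz_extension P F
    (fun y hy => hL _ fun x hx => by
      rw [← hr _ ⟨x, hx⟩, hσ' y]
      exact hy ⟨x, hx⟩)
    (fun h => by
      obtain ⟨c, hc⟩ := (isCompact_range h.continuous).bddBelow
      refine ⟨⟨r (C (-c)), LinearMap.mem_range_self _ _⟩, fun x => ?_⟩
      have := hc (Set.mem_range_self x)
      change 0 ≤ r (C (-c)) x + h x
      rw [hr, eval_C]
      linarith)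
  have hΛr : ∀ q, Λ (r q) = L q := by
    intro q
    have h1 := hΛ ⟨r q, LinearMap.mem_range_self _ _⟩
    have hker : ∀ q', r q' = 0 → 0 ≤ L q' := fun q' h => hL q' fun x hx => by
      rw [← hr _ ⟨x, hx⟩, h]
      exact le_rfl
    have h2 : r (σ ⟨r q, LinearMap.mem_range_self _ _⟩) = r q := hσ' _
    have h3 := hker (σ ⟨r q, LinearMap.mem_range_self _ _⟩ - q) (by rw [map_sub, h2, sub_self])
    have h4 := hker (q - σ ⟨r q, LinearMap.mem_range_self _ _⟩) (by rw [map_sub, h2, sub_self])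
    rw [map_sub] at h3 h4
    refine h1.trans (le_antisymm ?_ ?_)
    · exact sub_nonneg.1 h4
    · exact sub_nonneg.1 h3
  let Λ' : CompactlySupportedContinuousMap K ℝ →ₚ[ℝ] ℝ :=
    PositiveLinearMap.mk₀
      { toFun := fun h => Λ (h : C(K, ℝ))
        map_add' := fun h k => map_add Λ (h : C(K, ℝ)) (k : C(K, ℝ))
        map_smul' := fun c h => map_smul Λ c (h : C(K, ℝ)) } fun h hh => hΛP h fun x => hh x
  let μ := RealRMK.rieszMeasure Λ'
  have hemb : MeasurableEmbedding (Subtype.val : K → Fin m → ℝ) :=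
    MeasurableEmbedding.subtype_coe hK.measurableSet
  refine ⟨μ.map Subtype.val, inferInstance, fun q => ?_, fun q => ?_⟩
  · rw [hemb.integrable_map_iff]
    exact (r q).continuous.integrable_of_hasCompactSupport (HasCompactSupport.of_compactSpace _)
  · rw [hemb.integral_map, ← hΛr q]
    exact (RealRMK.integral_rieszMeasure Λ'
      (CompactlySupportedContinuousMap.continuousMapEquiv (r q))).symm

end Haviland

section Putinar

lemma isBoundedWrt_of_ball_mem {m : ℕ} {L : MvPolynomial (Fin m) ℝ →ₗ[ℝ] ℝ}
    (hL : ∀ q, 0 ≤ L (q ^ 2)) {N : ℝ}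
    (hN : C N - ∑ i : Fin m, X i ^ 2 ∈ localizingCone L) (f : MvPolynomial (Fin m) ℝ) :
    IsBoundedWrt (localizingCone L) f := by
  have h1 := one_mem_localizingCone hL
  have hsq : ∀ q, q ^ 2 ∈ localizingCone L := fun q => by
    simpa using sq_mul_mem_localizingCone h1 q
  induction f using MvPolynomial.induction_on with
  | C r => exact isBoundedWrt_algebraMap h1 r
  | add f g hf hg => exact hf.add hg
  | mul_X f i hf =>
    refine hf.mul hL ?_
    have hi : C N - X i ^ 2 ∈ localizingCone L := by
      have := add_mem hN (sum_mem fun j (_ : j ∈ Finset.univ.erase i) => hsq (X j))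
      rw [← Finset.add_sum_erase _ _ (Finset.mem_univ i)] at this
      convert this using 1
      ring
    have hpos : ∀ ε : MvPolynomial (Fin m) ℝ, ε ^ 2 = 1 →
        C (|N| + 1) + ε * X i ∈ localizingCone L := by
      intro ε hε
      have := add_mem (add_mem hi (hsq (X i + C (1 / 2) * ε)))
        ((localizingCone L).algebraMap_mem h1 (c := |N| - N + 3 / 4)
          (by linarith [le_abs_self N]))
      convert this using 1
      rw [algebraMap_eq, add_sq, mul_pow, hε, mul_one, ← C_pow,
        show |N| + 1 = N + (1 / 2) ^ 2 + (|N| - N + 3 / 4) by ring, C_add, C_add,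
        show (X i ^ 2 + 2 * X i * (C (1 / 2) * ε) + C ((1 / 2) ^ 2) : MvPolynomial (Fin m) ℝ)
          = X i ^ 2 + (2 * C (1 / 2)) * (ε * X i) + C ((1 / 2) ^ 2) by ring,
        show (2 * C (1 / 2) : MvPolynomial (Fin m) ℝ) = 1 by
          rw [← map_ofNat (C : ℝ →+* MvPolynomial (Fin m) ℝ) 2, ← C_mul]; norm_num]
      ring
    refine ⟨|N| + 1, by positivity, ?_, ?_⟩
    · simpa using hpos 1 (by ring)
    · simpa [sub_eq_add_neg] using hpos (-1) (by ring)

/-- **Putinar's theorem** for the ball, in its dual form. -/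
lemma map_nonneg_of_nonneg_on_ball {m : ℕ} {L : MvPolynomial (Fin m) ℝ →ₗ[ℝ] ℝ}
    (hL : ∀ q, 0 ≤ L (q ^ 2)) (hone : 0 < L 1) {N : ℝ}
    (hN : C N - ∑ i : Fin m, X i ^ 2 ∈ localizingCone L) (f : MvPolynomial (Fin m) ℝ)
    (hf : ∀ x ∈ {x : Fin m → ℝ | ∑ i, x i ^ 2 ≤ N}, 0 ≤ eval x f) : 0 ≤ L f := by
  have hbdd := isBoundedWrt_of_ball_mem hL hN
  have hpos : ∀ a ∈ localizingCone L, 0 ≤ ((L 1)⁻¹ • L) a := fun a ha =>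
    mul_nonneg (inv_nonneg.2 hone.le) (by simpa using ha 1)
  obtain ⟨φ, hφ, hφf⟩ := exists_algHom_le_of_state hbdd (one_mem_localizingCone hL)
    (fun a ha b hb => mul_mem_localizingCone hL ha (hbdd a) hb) ((L 1)⁻¹ • L)
    (inv_mul_cancel₀ hone.ne') hpos f
  have heval : ∀ q, φ q = eval (fun i => φ (X i)) q := fun q => by
    rw [← coe_aeval_eq_eval]
    exact DFunLike.congr_fun (aeval_unique φ) q
  have h1 := hφ _ hN
  rw [heval] at h1
  have h2 := hf (fun i => φ (X i)) (by simpa using h1)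
  rw [← heval] at h2
  have h3 : 0 ≤ (L 1)⁻¹ * L f := h2.trans hφf
  exact nonneg_of_mul_nonneg_right h3 (inv_pos.2 hone)

lemma isCompact_sum_sq_le (m : ℕ) (N : ℝ) :
    IsCompact {x : Fin m → ℝ | ∑ i, x i ^ 2 ≤ N} := by
  refine (isCompact_univ_pi fun _ => isCompact_Icc (a := -√N) (b := √N)).of_isClosed_subset
    (isClosed_le (by fun_prop) continuous_const) fun x hx i _ => ?_
  exact abs_le.1 (Real.abs_le_sqrt
    ((Finset.single_le_sum (fun j _ => sq_nonneg (x j)) (Finset.mem_univ i)).trans hx))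

end Putinar

lemma IsSumSq.sq_mul {A : Type*} [CommRing A] {σ : A} (hσ : IsSumSq σ) (q : A) :
    IsSumSq (q ^ 2 * σ) := by
  rw [sq]
  exact (IsSumSq.mul_self q).mul hσ

lemma isSumSq_mem_quadraticModule {m κ : ℕ} (G : Fin κ → MvPolynomial (Fin m) ℝ)
    {σ : MvPolynomial (Fin m) ℝ} (hσ : IsSumSq σ) : σ ∈ QuadraticModule G :=
  ⟨σ, 0, hσ, fun _ => IsSumSq.zero, by simp⟩

lemma sq_mul_mem_quadraticModule {m κ : ℕ} {G : Fin κ → MvPolynomial (Fin m) ℝ}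
    {f : MvPolynomial (Fin m) ℝ} (hf : f ∈ QuadraticModule G) (q : MvPolynomial (Fin m) ℝ) :
    q ^ 2 * f ∈ QuadraticModule G := by
  obtain ⟨σ₀, σ, h₀, h, rfl⟩ := hf
  exact ⟨q ^ 2 * σ₀, fun j => q ^ 2 * σ j, h₀.sq_mul q, fun j => (h j).sq_mul q, by
    simp only [mul_add, Finset.mul_sum, mul_assoc]⟩

/-- Jensen's inequality at the barycenter of a measure for a convex polynomial. -/
lemma eval_barycenter_nonpos {m : ℕ} {ν : Measure (Fin m → ℝ)} [IsFiniteMeasure ν] [NeZero ν]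
    (hpoly : ∀ q : MvPolynomial (Fin m) ℝ, Integrable (fun x => eval x q) ν)
    {f : MvPolynomial (Fin m) ℝ} (hf : ConvexOn ℝ Set.univ fun x => eval x f)
    (hle : ∫ x, eval x f ∂ν ≤ 0) :
    eval (fun i => (∫ x, x i ∂ν) / (∫ _, (1 : ℝ) ∂ν)) f ≤ 0 := by
  have hcoord : ∀ i, Integrable (fun x : Fin m → ℝ => x i) ν := fun i => by
    simpa using hpoly (X i)
  have hJ := hf.map_average_le (f := id) (μ := ν) (MvPolynomial.continuous_eval f).continuousOn
    isClosed_univ (by simp) (Integrable.of_eval hcoord) (hpoly f)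
  have hb : (⨍ x, id x ∂ν) = fun i => (∫ x, x i ∂ν) / (∫ _, (1 : ℝ) ∂ν) := by
    ext i
    simp_rw [average_eq, id, Pi.smul_apply, eval_integral hcoord, integral_const, smul_eq_mul,
      mul_one, div_eq_inv_mul]
  rw [hb] at hJ
  refine hJ.trans ?_
  rw [average_eq]
  exact mul_nonpos_of_nonneg_of_nonpos (inv_nonneg.2 measureReal_nonneg) hle

/-- A linear functional nonnegative on an Archimedean quadratic module, normalized by
`L(g) = 1` with `L(g - g*) ≥ 0`, `g* > 0`, and satisfying the dual feasibility
constraints, admits a representing measure `ν` with `∫ dν > 0` whose normalized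
barycenter is feasible. -/
theorem representing_measure_feasible (m n s κ : ℕ)
    (G : Fin κ → MvPolynomial (Fin m) ℝ)
    (harch : ∃ N : ℝ, (C N - ∑ i : Fin m, X i ^ 2) ∈ QuadraticModule G)
    (Lstar : MvPolynomial (Fin m) ℝ →ₗ[ℝ] ℝ)
    (hLpos : ∀ q ∈ QuadraticModule G, 0 ≤ Lstar q)
    (g : MvPolynomial (Fin m) ℝ) (gstar : ℝ) (hgstar : 0 < gstar)
    (hLg : Lstar g = 1) (hLgg : 0 ≤ Lstar (g - C gstar))
    (Y : Set (Fin n → ℝ)) (p : MvPolynomial (Fin m ⊕ Fin n) ℝ)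
    (ψ : Fin s → MvPolynomial (Fin m) ℝ)
    (hψconv : ∀ j, ConvexOn ℝ Set.univ fun x => eval x (ψ j))
    (hpconv : ∀ y ∈ Y, ConvexOn ℝ Set.univ fun x =>
        eval x (aeval (Sum.elim X fun j => C (y j)) p))
    (hLp : ∀ y ∈ Y, Lstar (aeval (Sum.elim X fun j => C (y j)) p) ≤ 0)
    (hLψ : ∀ j, Lstar (ψ j) ≤ 0) :
    ∃ ν : Measure (Fin m → ℝ),
      (∀ q : MvPolynomial (Fin m) ℝ, Integrable (fun x => eval x q) ν) ∧
      (∀ q : MvPolynomial (Fin m) ℝ, Lstar q = ∫ x, eval x q ∂ν) ∧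
      0 < (∫ x, (1 : ℝ) ∂ν) ∧
      (fun i => (∫ x, x i ∂ν) / (∫ x, (1 : ℝ) ∂ν)) ∈
        {x : Fin m → ℝ | (∀ j, eval x (ψ j) ≤ 0) ∧
          ∀ y ∈ Y, eval x (aeval (Sum.elim X fun j => C (y j)) p) ≤ 0} := by
  obtain ⟨N, hN⟩ := harch
  have hsq : ∀ q, 0 ≤ Lstar (q ^ 2) := fun q => hLpos _ <| isSumSq_mem_quadraticModule G <| by
    simpa only [sq] using IsSumSq.mul_self q
  have hcone : C N - ∑ i : Fin m, X i ^ 2 ∈ localizingCone Lstar := fun q =>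
    hLpos _ (sq_mul_mem_quadraticModule hN q)
  have hone : 0 < Lstar 1 := by
    have hcs := sq_map_mul_le_of_map_sq_nonneg Lstar hsq 1 g
    rw [one_mul, hLg, one_pow, one_pow] at hcs
    exact pos_of_mul_pos_left (one_pos.trans_le hcs) (hsq g)
  obtain ⟨ν, hfin, hpoly, hrep⟩ := exists_measure_of_nonneg_on_compact (isCompact_sum_sq_le m N)
    Lstar (map_nonneg_of_nonneg_on_ball hsq hone hcone)
  have hmass : Lstar 1 = ∫ _, (1 : ℝ) ∂ν := by simpa using hrep 1
  have : NeZero ν := ⟨fun h => by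
    rw [h, integral_zero_measure] at hmass
    exact hone.ne' hmass⟩
  refine ⟨ν, hpoly, hrep, hmass ▸ hone, fun j => ?_, fun y hy => ?_⟩
  · exact eval_barycenter_nonpos hpoly (hψconv j) (hrep _ ▸ hLψ j)
  · exact eval_barycenter_nonpos hpoly (hpconv y hy) (hrep _ ▸ hLp y hy)
end

section
/- Let q(x) ∈ ℝ[x] with K = {x ∈ ℝ^m : q(x) ≥ 0} compact. If h ∈ ℝ[x] is nonnegative on K, has only finitely many zeros on K, each lying in the interior of K, and the Hessian ∇²h is positive definite at each of these zeros, then h = σ_0 + σ_1·q for some sums of squares σ_0, σ_1 ∈ Σ²[x]. -/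
/-- A preordering of a commutative ring, allowed to contain `-1`. -/
structure IsPreordering {A : Type*} [CommRing A] (T : Set A) : Prop where
  add : ∀ {a b}, a ∈ T → b ∈ T → a + b ∈ T
  mul : ∀ {a b}, a ∈ T → b ∈ T → a * b ∈ T
  sq : ∀ a, a ^ 2 ∈ T

namespace IsPreordering

variable {A : Type*} [CommRing A] {T : Set A}

theorem zero (hT : IsPreordering T) : (0 : A) ∈ T := by simpa using hT.sq 0

theorem one (hT : IsPreordering T) : (1 : A) ∈ T := by simpa using hT.sq 1

theorem even_pow (hT : IsPreordering T) (a : A) (k : ℕ) : a ^ (2 * k) ∈ T := by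
  rw [mul_comm, pow_mul]; exact hT.sq _

theorem isSumSq (hT : IsPreordering T) {a : A} (ha : IsSumSq a) : a ∈ T := by
  induction ha with
  | zero => exact hT.zero
  | sq_add b _ ih => exact hT.add (pow_two b ▸ hT.sq b) ih

theorem adjoin (hT : IsPreordering T) (x : A) :
    IsPreordering {a | ∃ s ∈ T, ∃ t ∈ T, a = s + t * x} where
  add := by
    rintro _ _ ⟨s, hs, t, ht, rfl⟩ ⟨s', hs', t', ht', rfl⟩
    exact ⟨_, hT.add hs hs', _, hT.add ht ht', by ring⟩
  mul := by
    rintro _ _ ⟨s, hs, t, ht, rfl⟩ ⟨s', hs', t', ht', rfl⟩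
    exact ⟨_, hT.add (hT.mul hs hs') (hT.mul (hT.mul ht ht') (hT.sq x)),
      _, hT.add (hT.mul hs ht') (hT.mul ht hs'), by ring⟩
  sq a := ⟨a ^ 2, hT.sq a, 0, hT.zero, by ring⟩

theorem exists_isPrime_ge (hT : IsPreordering T) {f : A} (hf : ∀ k, -f ^ (2 * k) ∉ T) :
    ∃ P : Set A, T ⊆ P ∧ IsPreordering P ∧ (∀ k, -f ^ (2 * k) ∉ P) ∧
      ∀ x y, x * y ∈ P → x ∈ P ∨ -y ∈ P := by
  obtain ⟨P, hTP, ⟨hP, hfP⟩, hmax⟩ := zorn_subset_nonempty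
    {P : Set A | IsPreordering P ∧ ∀ k, -f ^ (2 * k) ∉ P} (by
      rintro c hc hchain ⟨P₀, hP₀⟩
      refine ⟨⋃₀ c, ⟨⟨?_, ?_, ?_⟩, ?_⟩, fun s hs => Set.subset_sUnion_of_mem hs⟩
      · rintro a b ⟨s, hs, ha⟩ ⟨t, ht, hb⟩
        rcases hchain.total hs ht with h | h
        · exact ⟨t, ht, (hc ht).1.add (h ha) hb⟩
        · exact ⟨s, hs, (hc hs).1.add ha (h hb)⟩
      · rintro a b ⟨s, hs, ha⟩ ⟨t, ht, hb⟩
        rcases hchain.total hs ht with h | h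
        · exact ⟨t, ht, (hc ht).1.mul (h ha) hb⟩
        · exact ⟨s, hs, (hc hs).1.mul ha (h hb)⟩
      · exact fun a => ⟨P₀, hP₀, (hc hP₀).1.sq a⟩
      · rintro k ⟨s, hs, h⟩
        exact (hc hs).2 k h) T ⟨hT, hf⟩
  refine ⟨P, hTP, hP, hfP, fun x y hxy => ?_⟩
  have key : ∀ z, z ∉ P → ∃ k, ∃ s ∈ P, ∃ t ∈ P, -f ^ (2 * k) = s + t * z := by
    intro z hz
    by_contra! hcon
    refine hz (hmax (y := {a | ∃ s ∈ P, ∃ t ∈ P, a = s + t * z})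
      ⟨hP.adjoin z, fun k ⟨s, hs, t, ht, h⟩ => hcon k s hs t ht h⟩
      (fun a ha => ⟨a, ha, 0, hP.zero, by ring⟩) ⟨0, hP.zero, 1, hP.one, by ring⟩)
  by_contra! hcon
  obtain ⟨k, s, hs, t, ht, h1⟩ := key x hcon.1
  obtain ⟨l, s', hs', t', ht', h2⟩ := key (-y) hcon.2
  refine hfP (k + l) ?_
  have : -f ^ (2 * (k + l)) = s * f ^ (2 * l) + f ^ (2 * k) * s' + s * s' + t * t' * (x * y) := by
    linear_combination (f ^ (2 * l) + s') * h1 - (t * x) * h2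
  rw [this]
  exact hP.add (hP.add (hP.add (hP.mul hs (hP.even_pow f l)) (hP.mul (hP.even_pow f k) hs'))
    (hP.mul hs hs')) (hP.mul (hP.mul ht ht') hxy)

end IsPreordering

/-- The nonnegative elements of an ordering of a subfield of `Ω`. -/
structure IsFieldCone {Ω : Type*} [Field Ω] (P : Set Ω) : Prop where
  one : (1 : Ω) ∈ P
  add : ∀ {a b}, a ∈ P → b ∈ P → a + b ∈ P
  mul : ∀ {a b}, a ∈ P → b ∈ P → a * b ∈ P
  inv : ∀ {a}, a ∈ P → a⁻¹ ∈ P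
  antisymm : ∀ {a}, a ∈ P → -a ∈ P → a = 0
  total : ∀ {a b}, a ∈ P → b ∈ P → a - b ∈ P ∨ b - a ∈ P

namespace IsFieldCone

variable {Ω : Type*} [Field Ω] {P : Set Ω}

theorem zero (hP : IsFieldCone P) : (0 : Ω) ∈ P := by
  simpa using hP.total hP.one hP.one

/-- The subfield generated by a field cone. -/
def subfield (hP : IsFieldCone P) : Subfield Ω where
  carrier := {a | a ∈ P ∨ -a ∈ P}
  zero_mem' := Or.inl hP.zero
  one_mem' := Or.inl hP.one
  neg_mem' := by
    rintro a (h | h)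
    · exact Or.inr (by simpa using h)
    · exact Or.inl h
  add_mem' := by
    rintro a b (ha | ha) (hb | hb)
    · exact Or.inl (hP.add ha hb)
    · rcases hP.total ha hb with h | h
      · exact Or.inl (by simpa using h)
      · exact Or.inr (by simpa [add_comm, sub_eq_add_neg] using h)
    · rcases hP.total hb ha with h | h
      · exact Or.inl (by simpa [add_comm] using h)
      · exact Or.inr (by simpa [add_comm, sub_eq_add_neg] using h)
    · exact Or.inr (by simpa [add_comm] using hP.add ha hb)
  mul_mem' := by
    rintro a b (ha | ha) (hb | hb)
    · exact Or.inl (hP.mul ha hb)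
    · exact Or.inr (by simpa using hP.mul ha hb)
    · exact Or.inr (by simpa using hP.mul ha hb)
    · exact Or.inl (by simpa using hP.mul ha hb)
  inv_mem' := by
    rintro a (h | h)
    · exact Or.inl (hP.inv h)
    · exact Or.inr (by simpa [inv_neg] using hP.inv h)

/-- The ring cone of nonnegative elements of the subfield generated by a field cone. -/
def ringCone (hP : IsFieldCone P) : RingCone hP.subfield where
  carrier := {a | (a : Ω) ∈ P}
  zero_mem' := hP.zero
  one_mem' := hP.one
  add_mem' := fun h h' => hP.add h h'
  mul_mem' := fun h h' => hP.mul h h'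
  eq_zero_of_mem_of_neg_mem' := fun h h' => Subtype.ext (hP.antisymm h h')

theorem mem_ringCone (hP : IsFieldCone P) {a : hP.subfield} : a ∈ hP.ringCone ↔ (a : Ω) ∈ P :=
  Iff.rfl

theorem exists_linearOrder (hP : IsFieldCone P) :
    ∃ _ : LinearOrder hP.subfield, IsStrictOrderedRing hP.subfield ∧
      ∀ a : hP.subfield, 0 ≤ a ↔ (a : Ω) ∈ P := by
  classical
  have : HasMemOrNegMem hP.ringCone := ⟨fun a => a.2⟩
  let : DecidablePred (· ∈ hP.ringCone) := Classical.decPred _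
  let o : LinearOrder hP.subfield := LinearOrder.mkOfAddGroupCone hP.ringCone
  have : @IsOrderedRing hP.subfield _ o.toPartialOrder := IsOrderedRing.mkOfCone hP.ringCone
  refine ⟨o, IsOrderedRing.toIsStrictOrderedRing _, fun a => ?_⟩
  rw [← hP.mem_ringCone]
  change a - 0 ∈ hP.ringCone ↔ _
  rw [sub_zero]

end IsFieldCone

/-- The intermediate value property for polynomials over an ordered field. -/
def HasPolyIVT (R : Type*) [Field R] [LinearOrder R] : Prop :=
  ∀ (f : Polynomial R) (a b : R), a < b → f.eval a < 0 → 0 < f.eval b →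
    ∃ c, a < c ∧ c < b ∧ f.eval c = 0

section Weighted

variable {R K : Type*} [Field R] [LinearOrder R] [IsStrictOrderedRing R] [Field K] [Algebra R K]

variable (R K) in
/-- Nonnegative multiples of squares. -/
def weightedSquares : Submonoid K where
  carrier := {x | ∃ c : R, 0 ≤ c ∧ ∃ y : K, x = algebraMap R K c * y ^ 2}
  one_mem' := ⟨1, zero_le_one, 1, by simp⟩
  mul_mem' := by
    rintro _ _ ⟨c, hc, y, rfl⟩ ⟨d, hd, z, rfl⟩
    exact ⟨c * d, mul_nonneg hc hd, y * z, by rw [map_mul]; ring⟩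

theorem isPreordering_weightedSquares :
    IsPreordering ((weightedSquares R K).subsemiringClosure : Set K) where
  add h h' := add_mem h h'
  mul h h' := mul_mem h h'
  sq a := by
    refine AddSubmonoid.subset_closure ⟨1, zero_le_one, a, by simp⟩

open Polynomial in
theorem neg_one_notMem_weightedSquares {f : R[X]} [hf : Fact (Irreducible f)] {a b : R}
    (ha : f.eval a < 0) (hb : 0 < f.eval b)
    (hroot : ∀ g : R[X], g.natDegree < f.natDegree → g.eval a < 0 → 0 < g.eval b →
      ∃ c, g.eval c = 0) :
    (-1 : AdjoinRoot f) ∉ (weightedSquares R (AdjoinRoot f)).subsemiringClosure := by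
  have hf0 : f ≠ 0 := hf.out.ne_zero
  have hn : 0 < f.natDegree := hf.out.natDegree_pos
  have key : ∀ t ∈ AddSubmonoid.closure (weightedSquares R (AdjoinRoot f) : Set (AdjoinRoot f)),
      ∃ s : R[X], AdjoinRoot.mk f s = t ∧ (∀ y, 0 ≤ s.eval y) ∧
        s.natDegree ≤ 2 * (f.natDegree - 1) := by
    intro t ht
    induction ht using AddSubmonoid.closure_induction with
    | mem x hx =>
      obtain ⟨c, hc, y, rfl⟩ := hx
      obtain ⟨g, rfl⟩ := AdjoinRoot.mk_surjective y
      refine ⟨C c * (g % f) ^ 2, ?_, fun y => ?_, ?_⟩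
      · have : AdjoinRoot.mk f (g % f) = AdjoinRoot.mk f g := by
          rw [AdjoinRoot.mk_eq_mk]
          exact ⟨-(g / f), by linear_combination EuclideanDomain.div_add_mod g f⟩
        rw [map_mul, map_pow, this]; rfl
      · simp only [eval_mul, eval_C, eval_pow]; positivity
      · refine (natDegree_C_mul_le _ _).trans (natDegree_pow_le.trans ?_)
        have := natDegree_mod_lt g hn.ne'
        omega
    | zero => exact ⟨0, by simp⟩
    | add x y _ _ hx hy =>
      obtain ⟨s, rfl, h1, h2⟩ := hx
      obtain ⟨s', rfl, h1', h2'⟩ := hy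
      exact ⟨s + s', by simp, fun y => by simpa using add_nonneg (h1 y) (h1' y),
        (natDegree_add_le _ _).trans (max_le h2 h2')⟩
  intro hmem
  obtain ⟨s, hs, hpos, hdeg⟩ := key _ hmem
  have : AdjoinRoot.mk f (s + 1) = 0 := by rw [map_add, hs, map_one]; ring
  obtain ⟨g, hg⟩ := AdjoinRoot.mk_eq_zero.1 this
  have hval : ∀ y, 0 < f.eval y * g.eval y := fun y => by
    rw [← eval_mul, ← hg]; simp only [eval_add, eval_one]; linarith [hpos y]
  have hg0 : g ≠ 0 := by rintro rfl; simpa using hval a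
  have hd := congrArg natDegree hg
  rw [natDegree_mul hf0 hg0, ← C_1, natDegree_add_C] at hd
  obtain ⟨c, hc⟩ := hroot g (by omega) (by have := hval a; by_contra! h; nlinarith)
    (by have := hval b; by_contra! h; nlinarith)
  simpa [hc] using hval c

end Weighted

theorem IsPreordering.isFieldCone_image {K Ω : Type*} [Field K] [Field Ω] (i : K →+* Ω) {P : Set K}
    (hP : IsPreordering P) (h1 : (-1 : K) ∉ P) (htot : ∀ x, x ∈ P ∨ -x ∈ P) :
    IsFieldCone (i '' P) where
  one := ⟨1, hP.one, map_one i⟩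
  add := by
    rintro _ _ ⟨a, ha, rfl⟩ ⟨b, hb, rfl⟩
    exact ⟨_, hP.add ha hb, map_add _ _ _⟩
  mul := by
    rintro _ _ ⟨a, ha, rfl⟩ ⟨b, hb, rfl⟩
    exact ⟨_, hP.mul ha hb, map_mul _ _ _⟩
  inv := by
    rintro _ ⟨a, ha, rfl⟩
    refine ⟨a⁻¹, ?_, map_inv₀ _ _⟩
    rcases eq_or_ne a 0 with rfl | h
    · simpa using hP.zero
    · have : a⁻¹ = a * a⁻¹ ^ 2 := by field_simp
      rw [this]
      exact hP.mul ha (hP.sq _)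
  antisymm := by
    rintro _ ⟨a, ha, rfl⟩ ⟨b, hb, hab⟩
    rw [← map_neg] at hab
    obtain rfl := i.injective hab
    by_contra h
    refine h1 ?_
    have h' : a ≠ 0 := by rintro rfl; simp at h
    have : (-1 : K) = a * (-a) * a⁻¹ ^ 2 := by field_simp
    rw [this]
    exact hP.mul (hP.mul ha hb) (hP.sq _)
  total := by
    rintro _ _ ⟨a, ha, rfl⟩ ⟨b, hb, rfl⟩
    rcases htot (a - b) with h | h
    · exact Or.inl ⟨_, h, map_sub _ _ _⟩
    · exact Or.inr ⟨_, h, by simp⟩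

open Polynomial in
theorem IsFieldCone.hasPolyIVT {Ω : Type*} [Field Ω] [IsAlgClosed Ω] {P : Set Ω}
    (hP : IsFieldCone P) (hmax : ∀ Q, IsFieldCone Q → P ⊆ Q → Q ⊆ P)
    [LinearOrder hP.subfield] [IsStrictOrderedRing hP.subfield]
    (h0 : ∀ a : hP.subfield, 0 ≤ a ↔ (a : Ω) ∈ P) : HasPolyIVT hP.subfield := by
  have main : ∀ n : ℕ, ∀ f : hP.subfield[X], f.natDegree = n → ∀ a b, a < b → f.eval a < 0 →
      0 < f.eval b → ∃ c, a < c ∧ c < b ∧ f.eval c = 0 := by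
    intro n
    induction n using Nat.strong_induction_on with
    | _ n ih =>
    intro f hfn a b hab ha hb
    have hf0 : f ≠ 0 := by rintro rfl; simp at ha
    have hfu : ¬ IsUnit f := by
      intro h
      obtain ⟨c, _, rfl⟩ := Polynomial.isUnit_iff.1 h
      simp only [eval_C] at ha hb
      exact lt_asymm ha hb
    by_cases hirr : Irreducible f
    · have : Fact (Irreducible f) := ⟨hirr⟩
      by_cases hroot : ∃ c, f.eval c = 0
      · obtain ⟨c, hc⟩ := hroot
        obtain ⟨g, hg⟩ := dvd_iff_isRoot.2 hc
        have hgu := (hirr.isUnit_or_isUnit hg).resolve_left (not_isUnit_X_sub_C c)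
        obtain ⟨d, _, rfl⟩ := Polynomial.isUnit_iff.1 hgu
        refine ⟨c, ?_, ?_, hc⟩ <;> simp only [hg, eval_mul, eval_sub, eval_X, eval_C] at ha hb <;>
        · by_contra! h
          rcases le_total 0 d with hd | hd <;> nlinarith
      · exfalso
        have hT := isPreordering_weightedSquares (R := hP.subfield) (K := AdjoinRoot f)
        have h1 := neg_one_notMem_weightedSquares ha hb fun g hg hga hgb => by
          obtain ⟨c, -, -, hc⟩ := ih _ (hfn ▸ hg) g rfl a b hab hga hgb
          exact ⟨c, hc⟩
        obtain ⟨Q, hTQ, hQ, hQ1, hQp⟩ := hT.exists_isPrime_ge (f := 1) (by simpa using h1)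
        have hdeg : (f.map (algebraMap hP.subfield Ω)).degree ≠ 0 := by
          rw [degree_map]
          exact fun h => hfu (isUnit_iff_degree_eq_zero.2 h)
        obtain ⟨θ, hθ⟩ := IsAlgClosed.exists_root _ hdeg
        let i : AdjoinRoot f →+* Ω := AdjoinRoot.lift (algebraMap hP.subfield Ω) θ
          (by rw [← eval_map]; exact hθ)
        have htot : ∀ x, x ∈ Q ∨ -x ∈ Q := fun x => hQp x x (pow_two x ▸ hQ.sq x)
        have hcone := hQ.isFieldCone_image i (by simpa using hQ1 0) htot
        have hsub : P ⊆ i '' Q := by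
          intro x hx
          refine ⟨AdjoinRoot.of f ⟨x, Or.inl hx⟩, hTQ (AddSubmonoid.subset_closure
            ⟨⟨x, Or.inl hx⟩, (h0 _).2 hx, 1, by simp⟩), ?_⟩
          exact AdjoinRoot.lift_of _
        have hle := hmax _ hcone hsub
        have hmem : θ ∈ hP.subfield := by
          have hi : i (AdjoinRoot.root f) = θ := AdjoinRoot.lift_root _
          rcases htot (AdjoinRoot.root f) with h | h
          · exact Or.inl (hle ⟨_, h, hi⟩)
          · exact Or.inr (hle ⟨_, h, by rw [map_neg, hi]⟩)
        refine hroot ⟨⟨θ, hmem⟩, ?_⟩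
        apply (algebraMap hP.subfield Ω).injective
        rw [map_zero, ← hθ.eq_zero, eval_map]
        exact (hom_eval₂ f (RingHom.id _) (algebraMap hP.subfield Ω) ⟨θ, hmem⟩)
    · rw [irreducible_iff] at hirr
      push Not at hirr
      obtain ⟨u, v, huv, hu, hv⟩ := hirr hfu
      subst huv
      have hu0 := left_ne_zero_of_mul hf0
      have hv0 := right_ne_zero_of_mul hf0
      have hud : 0 < u.natDegree := by
        by_contra! h
        exact hu (isUnit_iff_degree_eq_zero.2 (by rw [degree_eq_natDegree hu0]; simp; omega))
      have hvd : 0 < v.natDegree := by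
        by_contra! h
        exact hv (isUnit_iff_degree_eq_zero.2 (by rw [degree_eq_natDegree hv0]; simp; omega))
      rw [natDegree_mul hu0 hv0] at hfn
      have key : ∀ w : hP.subfield[X], w.natDegree < n → w.eval a * w.eval b < 0 →
          ∃ c, a < c ∧ c < b ∧ w.eval c = 0 := by
        intro w hw hwab
        rcases mul_neg_iff.1 hwab with ⟨h1, h2⟩ | ⟨h1, h2⟩
        · obtain ⟨c, h⟩ := ih _ hw (-w) (natDegree_neg w) a b hab (by simpa using h1)
            (by simpa using h2)
          exact ⟨c, by simpa using h⟩
        · exact ih _ hw w rfl a b hab h1 h2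
      rw [eval_mul] at ha hb
      have hprod : (u.eval a * u.eval b) * (v.eval a * v.eval b) < 0 := by
        have := mul_neg_of_neg_of_pos ha hb
        linarith
      rcases mul_neg_iff.1 hprod with ⟨-, h⟩ | ⟨h, -⟩
      · obtain ⟨c, h1, h2, h3⟩ := key v (by omega) h
        exact ⟨c, h1, h2, by simp [h3]⟩
      · obtain ⟨c, h1, h2, h3⟩ := key u (by omega) h
        exact ⟨c, h1, h2, by simp [h3]⟩
  exact fun f => main _ f rfl

universe u

namespace IsPreordering

variable {A : Type u} [CommRing A] {P : Set A}

/-- The support of a preordering containing `x` or `-x` for every `x`. -/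
def support (hP : IsPreordering P) (htot : ∀ x, x ∈ P ∨ -x ∈ P) : Ideal A where
  carrier := {a | a ∈ P ∧ -a ∈ P}
  zero_mem' := ⟨hP.zero, by simpa using hP.zero⟩
  add_mem' := fun ha hb => ⟨hP.add ha.1 hb.1, by simpa [add_comm] using hP.add ha.2 hb.2⟩
  smul_mem' := by
    rintro c a ⟨h1, h2⟩
    rcases htot c with h | h
    · exact ⟨hP.mul h h1, by simpa using hP.mul h h2⟩
    · exact ⟨by simpa using hP.mul h h2, by simpa using hP.mul h h1⟩

theorem isPrime_support (hP : IsPreordering P) (htot : ∀ x, x ∈ P ∨ -x ∈ P) (h1 : (-1 : A) ∉ P)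
    (hprime : ∀ x y, x * y ∈ P → x ∈ P ∨ -y ∈ P) : (hP.support htot).IsPrime := by
  refine ⟨fun h => h1 (((Ideal.eq_top_iff_one _).1 h).2), fun {x y} hxy => ?_⟩
  by_contra! hcon
  have key : ∀ z, z * y ∈ P → -(z * y) ∈ P → z ∉ P → y ∈ hP.support htot := by
    intro z h1 h2 hz
    refine ⟨?_, (hprime _ _ h1).resolve_left hz⟩
    simpa using (hprime z (-y) (by simpa using h2)).resolve_left hz
  by_cases hx : x ∈ P
  · refine hcon.2 (key (-x) (by simpa using hxy.2) (by simpa using hxy.1) fun h => hcon.1 ⟨hx, h⟩)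
  · exact hcon.2 (key x hxy.1 hxy.2 hx)

theorem isFieldCone_fraction {Ω : Type*} [Field Ω] (hP : IsPreordering P)
    (htot : ∀ x, x ∈ P ∨ -x ∈ P)
    (hprime : (hP.support htot).IsPrime) (j : A →+* Ω)
    (hj : ∀ a, j a = 0 ↔ a ∈ hP.support htot) :
    IsFieldCone {x : Ω | ∃ a ∈ P, ∃ b ∈ P, b ∉ hP.support htot ∧ x * j b = j a} where
  one := ⟨1, hP.one, 1, hP.one, fun h => hprime.ne_top ((Ideal.eq_top_iff_one _).2 h), by simp⟩
  add := by
    rintro x y ⟨a, ha, b, hb, hb0, h⟩ ⟨a', ha', b', hb', hb0', h'⟩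
    refine ⟨a * b' + a' * b, hP.add (hP.mul ha hb') (hP.mul ha' hb), b * b', hP.mul hb hb',
      fun h => (hprime.mem_or_mem h).elim hb0 hb0', ?_⟩
    simp only [map_mul, map_add]
    linear_combination j b' * h + j b * h'
  mul := by
    rintro x y ⟨a, ha, b, hb, hb0, h⟩ ⟨a', ha', b', hb', hb0', h'⟩
    refine ⟨a * a', hP.mul ha ha', b * b', hP.mul hb hb',
      fun h => (hprime.mem_or_mem h).elim hb0 hb0', ?_⟩
    simp only [map_mul]
    linear_combination y * j b' * h + j a * h'
  inv := by
    rintro x ⟨a, ha, b, hb, hb0, h⟩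
    rcases eq_or_ne x 0 with rfl | hx
    · exact ⟨a, ha, b, hb, hb0, by simpa using h⟩
    · refine ⟨b, hb, a, ha, fun h0 => ?_, ?_⟩
      · rw [← hj, ← h] at h0
        exact hb0 ((hj b).1 ((mul_eq_zero.1 h0).resolve_left hx))
      · rw [← h]; field_simp
  antisymm := by
    rintro x ⟨a, ha, b, hb, hb0, h⟩ ⟨a', ha', b', hb', hb0', h'⟩
    have hs : a * b' + a' * b ∈ hP.support htot := by
      rw [← hj]
      simp only [map_mul, map_add]
      linear_combination -j b' * h - j b * h'
    have hab : a * b' ∈ hP.support htot := by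
      refine ⟨hP.mul ha hb', ?_⟩
      have : -(a * b') = a' * b + -(a * b' + a' * b) := by ring
      rw [this]
      exact hP.add (hP.mul ha' hb) hs.2
    have ha0 := (hj a).2 ((hprime.mem_or_mem hab).resolve_right hb0')
    rw [ha0] at h
    exact (mul_eq_zero.1 h).resolve_right fun h => hb0 ((hj b).1 h)
  total := by
    rintro x y ⟨a, ha, b, hb, hb0, h⟩ ⟨a', ha', b', hb', hb0', h'⟩
    have hbb : b * b' ∉ hP.support htot := fun h => (hprime.mem_or_mem h).elim hb0 hb0'
    rcases htot (a * b' - a' * b) with hc | hc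
    · refine Or.inl ⟨_, hc, _, hP.mul hb hb', hbb, ?_⟩
      simp only [map_mul, map_sub]
      linear_combination j b' * h - j b * h'
    · refine Or.inr ⟨_, hc, _, hP.mul hb hb', hbb, ?_⟩
      simp only [map_mul, map_sub, map_neg]
      linear_combination -j b' * h + j b * h'

end IsPreordering

theorem IsFieldCone.exists_maximal {Ω : Type*} [Field Ω] {P : Set Ω} (hP : IsFieldCone P) :
    ∃ Q, P ⊆ Q ∧ IsFieldCone Q ∧ ∀ Q', IsFieldCone Q' → Q ⊆ Q' → Q' ⊆ Q := by
  obtain ⟨Q, hPQ, hQ, hmax⟩ := zorn_subset_nonempty {Q : Set Ω | IsFieldCone Q} (by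
    rintro c hc hchain ⟨P₀, hP₀⟩
    have key : ∀ {a b}, a ∈ ⋃₀ c → b ∈ ⋃₀ c → ∃ s ∈ c, a ∈ s ∧ b ∈ s := by
      rintro a b ⟨s, hs, ha⟩ ⟨t, ht, hb⟩
      rcases hchain.total hs ht with h | h
      · exact ⟨t, ht, h ha, hb⟩
      · exact ⟨s, hs, ha, h hb⟩
    refine ⟨⋃₀ c, ⟨⟨P₀, hP₀, (hc hP₀).one⟩, ?_, ?_, ?_, ?_, ?_⟩,
      fun s hs => Set.subset_sUnion_of_mem hs⟩
    · intro a b ha hb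
      obtain ⟨s, hs, h1, h2⟩ := key ha hb
      exact ⟨s, hs, (hc hs).add h1 h2⟩
    · intro a b ha hb
      obtain ⟨s, hs, h1, h2⟩ := key ha hb
      exact ⟨s, hs, (hc hs).mul h1 h2⟩
    · rintro a ⟨s, hs, h⟩
      exact ⟨s, hs, (hc hs).inv h⟩
    · intro a ha hb
      obtain ⟨s, hs, h1, h2⟩ := key ha hb
      exact (hc hs).antisymm h1 h2
    · intro a b ha hb
      obtain ⟨s, hs, h1, h2⟩ := key ha hb
      exact ((hc hs).total h1 h2).imp (⟨s, hs, ·⟩) (⟨s, hs, ·⟩)) P hP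
  exact ⟨Q, hPQ, hQ, fun Q' h h' => hmax h h'⟩

theorem IsPreordering.exists_ringHom_hasPolyIVT {A : Type u} [CommRing A] {T : Set A}
    (hT : IsPreordering T) {f : A} (hf : ∀ k, -f ^ (2 * k) ∉ T) :
    ∃ (R : Type u) (_ : Field R) (_ : LinearOrder R) (_ : IsStrictOrderedRing R) (φ : A →+* R),
      HasPolyIVT R ∧ (∀ a ∈ T, 0 ≤ φ a) ∧ φ f ≠ 0 := by
  obtain ⟨P, hTP, hP, hfP, hprime⟩ := hT.exists_isPrime_ge hf
  have htot : ∀ x, x ∈ P ∨ -x ∈ P := fun x => hprime x x (pow_two x ▸ hP.sq x)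
  have hsupp := hP.isPrime_support htot (by simpa using hfP 0) hprime
  let B := A ⧸ hP.support htot
  have : IsDomain B := Ideal.Quotient.isDomain _
  let Ω := AlgebraicClosure (FractionRing B)
  let j : A →+* Ω := (algebraMap (FractionRing B) Ω).comp
    ((algebraMap B (FractionRing B)).comp (Ideal.Quotient.mk (hP.support htot)))
  have hj : ∀ a, j a = 0 ↔ a ∈ hP.support htot := by
    intro a
    rw [← Ideal.Quotient.eq_zero_iff_mem]
    simp only [j, RingHom.comp_apply, map_eq_zero]
    exact map_eq_zero_iff _ (IsFractionRing.injective B (FractionRing B))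
  obtain ⟨Q, hQ₀, hQ, hmax⟩ := (hP.isFieldCone_fraction htot hsupp j hj).exists_maximal
  obtain ⟨o, ho, h0⟩ := hQ.exists_linearOrder
  have hPQ : ∀ a ∈ P, j a ∈ Q := fun a ha => hQ₀ ⟨a, ha, 1, hP.one,
    fun h => hsupp.ne_top ((Ideal.eq_top_iff_one _).2 h), by simp⟩
  refine ⟨hQ.subfield, inferInstance, o, ho, j.codRestrict hQ.subfield fun a => ?_,
    hQ.hasPolyIVT hmax h0, fun a ha => (h0 _).2 (hPQ a (hTP ha)), fun h => ?_⟩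
  · rcases htot a with h | h
    · exact Or.inl (hPQ a h)
    · exact Or.inr (by simpa using hPQ _ h)
  · have h' : j f = 0 := congrArg Subtype.val h
    refine hfP 1 ?_
    have := (hP.support htot).mul_mem_left f ((hj f).1 h')
    simpa [pow_two] using this.2

namespace HasPolyIVT

open Polynomial

variable {R : Type*} [Field R] [LinearOrder R] [IsStrictOrderedRing R]

theorem exists_root_Ioo (hR : HasPolyIVT R) (f : R[X]) {a b : R} (hab : a < b)
    (h : f.eval a * f.eval b < 0) : ∃ c, a < c ∧ c < b ∧ f.eval c = 0 := by
  rcases mul_neg_iff.1 h with ⟨h1, h2⟩ | ⟨h1, h2⟩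
  · obtain ⟨c, hc⟩ := hR (-f) a b hab (by simpa using h1) (by simpa using h2)
    exact ⟨c, by simpa using hc⟩
  · exact hR f a b hab h1 h2

theorem exists_root_Ioo_of_sign_ne (hR : HasPolyIVT R) (f : R[X]) {a b : R} (hab : a < b)
    (ha : f.eval a ≠ 0) (hb : f.eval b ≠ 0)
    (h : SignType.sign (f.eval a) ≠ SignType.sign (f.eval b)) :
    ∃ c, a < c ∧ c < b ∧ f.eval c = 0 := by
  refine hR.exists_root_Ioo f hab ?_
  rcases ha.lt_or_gt with ha | ha <;> rcases hb.lt_or_gt with hb | hb <;>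
    simp_all [mul_neg_of_neg_of_pos, mul_neg_of_pos_of_neg]

theorem exists_root_uIcc_of_sign_ne (hR : HasPolyIVT R) (f : R[X]) {a b : R}
    (h : SignType.sign (f.eval a) ≠ SignType.sign (f.eval b)) :
    ∃ c ∈ Set.uIcc a b, f.eval c = 0 := by
  by_cases ha : f.eval a = 0
  · exact ⟨a, Set.left_mem_uIcc, ha⟩
  by_cases hb : f.eval b = 0
  · exact ⟨b, Set.right_mem_uIcc, hb⟩
  rcases lt_trichotomy a b with hab | rfl | hab
  · obtain ⟨c, h1, h2, h3⟩ := hR.exists_root_Ioo_of_sign_ne f hab ha hb h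
    exact ⟨c, Set.mem_uIcc_of_le h1.le h2.le, h3⟩
  · exact absurd rfl h
  · obtain ⟨c, h1, h2, h3⟩ := hR.exists_root_Ioo_of_sign_ne f hab hb ha h.symm
    exact ⟨c, Set.mem_uIcc_of_ge h1.le h2.le, h3⟩

theorem exists_derivative_eq_zero (hR : HasPolyIVT R) (p : R[X]) {a b : R} (hab : a < b)
    (ha : p.eval a = 0) (hb : p.eval b = 0) :
    ∃ c, a < c ∧ c < b ∧ p.derivative.eval c = 0 := by
  classical
  rcases eq_or_ne p 0 with rfl | hp
  · obtain ⟨c, h1, h2⟩ := exists_between hab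
    exact ⟨c, h1, h2, by simp⟩
  have hne : (p.roots.toFinset.filter (a < ·)).Nonempty := ⟨b, by simp [hp, hb, hab]⟩
  obtain ⟨d, hd, hmin⟩ := Finset.exists_minimal hne
  simp only [Finset.mem_filter, Multiset.mem_toFinset, mem_roots hp, IsRoot.def] at hd hmin
  have hdb : d ≤ b := by
    rcases le_total d b with h | h
    · exact h
    · exact hmin ⟨hb, hab⟩ h
  have hno : ∀ c, a < c → c < d → p.eval c ≠ 0 := fun c h1 h2 h3 =>
    absurd (hmin ⟨h3, h1⟩ h2.le) h2.not_ge
  suffices ∃ c, a < c ∧ c < d ∧ p.derivative.eval c = 0 by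
    obtain ⟨c, h1, h2, h3⟩ := this
    exact ⟨c, h1, h2.trans_le hdb, h3⟩
  obtain ⟨u, hu, hua⟩ := exists_eq_pow_rootMultiplicity_mul_and_not_dvd p hp a
  have hu0 : u ≠ 0 := by rintro rfl; simp at hua
  obtain ⟨v, hv, hvd⟩ := exists_eq_pow_rootMultiplicity_mul_and_not_dvd u hu0 d
  have hm : 0 < rootMultiplicity a p := (rootMultiplicity_pos hp).2 ha
  rw [dvd_iff_isRoot, IsRoot.def] at hua hvd
  have hn : 0 < rootMultiplicity d u := by
    refine (rootMultiplicity_pos hu0).2 ?_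
    have := hd.1
    rw [hu, eval_mul] at this
    refine (mul_eq_zero.1 this).resolve_left ?_
    simp [(sub_pos.2 hd.2).ne']
  obtain ⟨m, hm'⟩ := Nat.exists_eq_succ_of_ne_zero hm.ne'
  obtain ⟨n, hn'⟩ := Nat.exists_eq_succ_of_ne_zero hn.ne'
  rw [hm'] at hu
  rw [hn'] at hv
  have hva : v.eval a ≠ 0 := by
    intro h; apply hua; rw [hv, eval_mul, h, mul_zero]
  have hsame : 0 < v.eval a * v.eval d := by
    rcases (mul_ne_zero hva hvd).lt_or_gt with h | h
    · obtain ⟨c, h1, h2, h3⟩ := hR.exists_root_Ioo v hd.2 h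
      exact absurd (by rw [hu, hv, eval_mul, eval_mul, h3]; simp) (hno c h1 h2)
    · exact h
  obtain ⟨c, h1, h2, h3⟩ := hR.exists_root_Ioo
    (C ((m + 1 : ℕ) : R) * (X - C d) * v + C ((n + 1 : ℕ) : R) * (X - C a) * v +
      (X - C a) * (X - C d) * v.derivative) hd.2 (by
    simp only [eval_add, eval_mul, eval_C, eval_sub, eval_X, sub_self, mul_zero, zero_mul,
      add_zero, zero_add]
    have : (0 : R) < ((m + 1 : ℕ) : R) * ((n + 1 : ℕ) : R) * (d - a) ^ 2 := by
      have := sub_pos.2 hd.2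
      positivity
    nlinarith [mul_pos this hsame])
  refine ⟨c, h1, h2, ?_⟩
  have hder : p.derivative = (X - C a) ^ m * (X - C d) ^ n *
      (C ((m + 1 : ℕ) : R) * (X - C d) * v + C ((n + 1 : ℕ) : R) * (X - C a) * v +
      (X - C a) * (X - C d) * v.derivative) := by
    rw [hu, hv]
    simp only [derivative_mul, derivative_X_sub_C_pow, Nat.succ_eq_add_one, Nat.add_sub_cancel]
    simp only [map_natCast]
    ring
  rw [hder, eval_mul, h3, mul_zero]

theorem exists_derivative_mul_eq_sub (hR : HasPolyIVT R) (p : R[X]) {a b : R} (hab : a < b) :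
    ∃ c, a < c ∧ c < b ∧ p.derivative.eval c * (b - a) = p.eval b - p.eval a := by
  obtain ⟨c, h1, h2, h3⟩ := hR.exists_derivative_eq_zero
    (p * C (b - a) - C (p.eval b - p.eval a) * (X - C a) - C (p.eval a * (b - a))) hab
    (by simp) (by simp only [eval_sub, eval_mul, eval_C, eval_X]; ring)
  refine ⟨c, h1, h2, ?_⟩
  simp only [derivative_sub, derivative_mul, derivative_C, derivative_X, eval_sub,
    eval_mul, eval_C, mul_zero, zero_mul, add_zero, zero_add, sub_zero, mul_one] at h3
  linarith

theorem real : HasPolyIVT ℝ := by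
  intro f a b hab ha hb
  obtain ⟨c, hc, h⟩ := intermediate_value_Ioo hab.le f.continuous.continuousOn (Set.mem_Ioo.2 ⟨ha, hb⟩)
  exact ⟨c, hc.1, hc.2, h⟩

end HasPolyIVT

namespace Polynomial

variable {R : Type*} [Field R] [LinearOrder R] [IsStrictOrderedRing R]

theorem exists_le_eval_of_leadingCoeff_pos (n : ℕ) (p : R[X]) (hn : p.natDegree = n)
    (h : 0 < p.leadingCoeff) : ∃ δ > 0, ∃ B, ∀ y ≥ B, δ ≤ p.eval y := by
  induction n generalizing p with
  | zero =>
    obtain ⟨c, rfl⟩ := natDegree_eq_zero.1 hn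
    exact ⟨c, by simpa using h, 0, by simp⟩
  | succ n ih =>
    obtain ⟨δ, hδ, B, hB⟩ := ih p.divX (by rw [natDegree_divX_eq_natDegree_tsub_one, hn]; rfl)
      (by rwa [leadingCoeff, natDegree_divX_eq_natDegree_tsub_one, coeff_divX, hn,
        Nat.add_sub_cancel, ← hn])
    refine ⟨δ, hδ, max B ((δ + |p.coeff 0|) / δ), fun y hy => ?_⟩
    have h1 := hB y ((le_max_left _ _).trans hy)
    have h2 := (div_le_iff₀ hδ).1 ((le_max_right _ _).trans hy)
    have h3 : 0 ≤ y := le_trans (by positivity) ((le_max_right _ _).trans hy)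
    rw [← divX_mul_X_add p]
    simp only [eval_add, eval_mul, eval_X, eval_C]
    nlinarith [mul_le_mul_of_nonneg_right h1 h3, neg_abs_le (p.coeff 0)]

theorem exists_sign_eval_eq_top (p : R[X]) :
    ∃ B, ∀ y ≥ B, SignType.sign (p.eval y) = SignType.sign p.leadingCoeff := by
  rcases lt_trichotomy p.leadingCoeff 0 with h | h | h
  · obtain ⟨δ, hδ, B, hB⟩ := exists_le_eval_of_leadingCoeff_pos _ (-p) rfl (by simpa using h)
    refine ⟨B, fun y hy => ?_⟩
    rw [sign_neg h, sign_neg]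
    have := hB y hy
    rw [eval_neg] at this
    linarith
  · rw [leadingCoeff_eq_zero] at h
    exact ⟨0, by simp [h]⟩
  · obtain ⟨δ, hδ, B, hB⟩ := exists_le_eval_of_leadingCoeff_pos _ p rfl h
    exact ⟨B, fun y hy => by rw [sign_pos h, sign_pos (hδ.trans_le (hB y hy))]⟩

theorem exists_sign_eval_eq_bot (p : R[X]) :
    ∃ B, ∀ y ≤ B, SignType.sign (p.eval y) =
      SignType.sign ((-1) ^ p.natDegree * p.leadingCoeff) := by
  obtain ⟨B, hB⟩ := exists_sign_eval_eq_top (p.comp (-X))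
  refine ⟨-B, fun y hy => ?_⟩
  have := hB (-y) (le_neg.1 hy)
  rwa [eval_comp, eval_neg, eval_X, neg_neg, comp_neg_X_leadingCoeff_eq] at this

end Polynomial

section Matching

open Polynomial

section Compat

variable {α β : Type*} [LinearOrder α] [LinearOrder β]

/-- `(y, z)` can be added to `M` without destroying the monotonicity of the matching. -/
def Compat (M : Finset (α × β)) (y : α) (z : β) : Prop := ∀ m ∈ M, cmp m.1 y = cmp m.2 z

theorem Compat.image_swap {M : Finset (α × β)} {y : α} {z : β} (h : Compat M y z) :
    Compat (M.image Prod.swap) z y := by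
  intro m hm
  obtain ⟨n, hn, rfl⟩ := Finset.mem_image.1 hm
  exact (h n hn).symm

theorem Compat.of_image_swap {M : Finset (α × β)} {y : α} {z : β}
    (h : Compat (M.image Prod.swap) z y) : Compat M y z :=
  fun m hm => (h m.swap (Finset.mem_image_of_mem _ hm)).symm

theorem cmp_eq_cmp_of_lt_iff_lt {a b : α} {c d : β}
    (h1 : a < b ↔ c < d) (h2 : b < a ↔ d < c) : cmp a b = cmp c d := by
  rcases lt_trichotomy a b with h | h | h
  · rw [(cmp_eq_lt_iff _ _).2 h, (cmp_eq_lt_iff _ _).2 (h1.1 h)]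
  · have : c = d := le_antisymm (not_lt.1 fun h' => (h2.2 h').ne' h)
      (not_lt.1 fun h' => (h1.2 h').ne h) |>.symm ▸ rfl
    rw [h, this, cmp_self_eq_eq, cmp_self_eq_eq]
  · rw [(cmp_eq_gt_iff _ _).2 h, (cmp_eq_gt_iff _ _).2 (h2.1 h)]

end Compat

variable {R S : Type*} [Field R] [LinearOrder R] [IsStrictOrderedRing R]
  [Field S] [LinearOrder S] [IsStrictOrderedRing S]

theorem sign_eq_sign_of_no_root (hR : HasPolyIVT R) {p : R[X]} {a b : R}
    (h : ∀ ρ, p.eval ρ = 0 → (a < ρ ↔ b < ρ)) (ha : p.eval a ≠ 0) (hb : p.eval b ≠ 0) :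
    SignType.sign (p.eval a) = SignType.sign (p.eval b) := by
  by_contra hne
  obtain ⟨c, hc, hc0⟩ := hR.exists_root_uIcc_of_sign_ne p hne
  have hca : a ≠ c := by rintro rfl; exact ha hc0
  have hcb : b ≠ c := by rintro rfl; exact hb hc0
  have := h c hc0
  rcases Set.mem_uIcc.1 hc with ⟨h1, h2⟩ | ⟨h1, h2⟩
  · exact (this.1 (h1.lt_of_ne hca)).not_ge h2
  · exact (this.2 (h1.lt_of_ne hcb)).not_ge h2

theorem exists_mem_no_root (hR : HasPolyIVT R) {p : R[X]} (D : Finset R)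
    (hder : ∀ c, p.derivative.eval c = 0 → c ∈ D)
    (hlo : ∃ d ∈ D, ∀ ρ, p.eval ρ = 0 → d < ρ) (hhi : ∃ d ∈ D, ∀ ρ, p.eval ρ = 0 → ρ < d)
    {y : R} (hyD : y ∉ D) (hy : p.eval y ≠ 0) :
    ∃ d ∈ D, p.eval d ≠ 0 ∧ ∀ ρ, p.eval ρ = 0 → (d < ρ ↔ y < ρ) := by
  obtain ⟨d₀, hd₀, h₀⟩ := hlo
  obtain ⟨d₁, hd₁, h₁⟩ := hhi
  rcases lt_or_gt_of_ne (show y ≠ d₀ by rintro rfl; exact hyD hd₀) with h | h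
  · exact ⟨d₀, hd₀, fun h => lt_irrefl _ (h₀ _ h), fun ρ hρ =>
      iff_of_true (h₀ ρ hρ) (h.trans (h₀ ρ hρ))⟩
  rcases lt_or_gt_of_ne (show d₁ ≠ y by rintro rfl; exact hyD hd₁) with h' | h'
  · exact ⟨d₁, hd₁, fun h => lt_irrefl _ (h₁ _ h), fun ρ hρ =>
      iff_of_false (h₁ ρ hρ).not_gt ((h₁ ρ hρ).trans h').not_gt⟩
  obtain ⟨l, hl, hlmax⟩ := (D.filter (· < y)).exists_max_image id
    ⟨d₀, Finset.mem_filter.2 ⟨hd₀, h⟩⟩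
  obtain ⟨r, hr, hrmin⟩ := (D.filter (y < ·)).exists_min_image id
    ⟨d₁, Finset.mem_filter.2 ⟨hd₁, h'⟩⟩
  simp only [Finset.mem_filter, id, and_imp] at hl hr hlmax hrmin
  by_contra! hcon
  obtain ⟨ρ₁, hρ₁, h1, h2⟩ : ∃ ρ, p.eval ρ = 0 ∧ l ≤ ρ ∧ ρ < y := by
    by_cases hpl : p.eval l = 0
    · exact ⟨l, hpl, le_rfl, hl.2⟩
    · obtain ⟨ρ, hρ, hiff⟩ := hcon l hl.1 hpl
      have hne : ρ ≠ y := by rintro rfl; exact hy hρ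
      rcases hiff with ⟨h1, h2⟩ | ⟨h1, h2⟩
      · exact ⟨ρ, hρ, h1.le, h2.lt_of_ne hne⟩
      · exact absurd (h2.trans_le h1) hl.2.not_gt
  obtain ⟨ρ₂, hρ₂, h3, h4⟩ : ∃ ρ, p.eval ρ = 0 ∧ y < ρ ∧ ρ ≤ r := by
    by_cases hpl : p.eval r = 0
    · exact ⟨r, hpl, hr.2, le_rfl⟩
    · obtain ⟨ρ, hρ, hiff⟩ := hcon r hr.1 hpl
      rcases hiff with ⟨h1, h2⟩ | ⟨h1, h2⟩
      · exact absurd (h1.trans_le h2) hr.2.not_gt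
      · exact ⟨ρ, hρ, h2, h1⟩
  obtain ⟨c, hc1, hc2, hc3⟩ := hR.exists_derivative_eq_zero p (h2.trans h3) hρ₁ hρ₂
  have hcD := hder c hc3
  rcases lt_trichotomy c y with hcy | rfl | hcy
  · exact absurd (h1.trans_lt hc1) (hlmax c hcD hcy).not_gt
  · exact hyD hcD
  · exact absurd (hc2.trans_le h4) (hrmin c hcD hcy).not_gt

theorem exists_compat_root (hR : HasPolyIVT R) (hS : HasPolyIVT S) {p : R[X]} {q : S[X]}
    {M : Finset (R × S)} (hM : ∀ m ∈ M, Compat M m.1 m.2)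
    (hsign : ∀ m ∈ M, SignType.sign (p.eval m.1) = SignType.sign (q.eval m.2))
    (hder : ∀ c, p.derivative.eval c = 0 → ∃ m ∈ M, m.1 = c) {ρ : R} (hρ : p.eval ρ = 0)
    (hlo : ∃ m ∈ M, m.1 < ρ) (hhi : ∃ m ∈ M, ρ < m.1) :
    ∃ ρ', q.eval ρ' = 0 ∧ Compat M ρ ρ' := by
  by_cases hρM : ∃ m ∈ M, m.1 = ρ
  · obtain ⟨m, hm, rfl⟩ := hρM
    refine ⟨m.2, ?_, hM m hm⟩
    have := hsign m hm
    rwa [hρ, sign_zero, eq_comm, sign_eq_zero_iff] at this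
  push Not at hρM
  obtain ⟨m₀, hm₀, h₀⟩ := hlo
  obtain ⟨m₁, hm₁, h₁⟩ := hhi
  obtain ⟨l, hl, hlmax⟩ := (M.filter (·.1 < ρ)).exists_max_image (·.1)
    ⟨m₀, Finset.mem_filter.2 ⟨hm₀, h₀⟩⟩
  obtain ⟨r, hr, hrmin⟩ := (M.filter (ρ < ·.1)).exists_min_image (·.1)
    ⟨m₁, Finset.mem_filter.2 ⟨hm₁, h₁⟩⟩
  simp only [Finset.mem_filter, and_imp] at hl hr hlmax hrmin
  have hadj : ∀ c, l.1 < c → c < r.1 → p.derivative.eval c ≠ 0 := by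
    intro c h1 h2 h3
    obtain ⟨m, hm, rfl⟩ := hder c h3
    rcases lt_or_gt_of_ne (hρM m hm) with h | h
    · exact absurd h1 (hlmax m hm h).not_gt
    · exact absurd h2 (hrmin m hm h).not_gt
  obtain ⟨c, hc1, hc2, hc3⟩ := hR.exists_derivative_mul_eq_sub p hl.2
  obtain ⟨d, hd1, hd2, hd3⟩ := hR.exists_derivative_mul_eq_sub p hr.2
  have hcd : 0 < p.derivative.eval c * p.derivative.eval d := by
    rcases (mul_ne_zero (hadj c hc1 (hc2.trans hr.2)) (hadj d (hl.2.trans hd1) hd2)).lt_or_gt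
      with h | h
    · obtain ⟨e, h1, h2, h3⟩ := hR.exists_root_Ioo _ (hc2.trans hd1) h
      exact absurd h3 (hadj e (hc1.trans h1) (h2.trans hd2))
    · exact h
  have hneg : p.eval l.1 * p.eval r.1 < 0 := by
    have := mul_pos hcd (mul_pos (sub_pos.2 hl.2) (sub_pos.2 hr.2))
    rw [hρ] at hc3 hd3
    have e : p.derivative.eval c * p.derivative.eval d * ((ρ - l.1) * (r.1 - ρ)) =
        -(p.eval l.1 * p.eval r.1) := by
      linear_combination (p.derivative.eval d * (r.1 - ρ)) * hc3 - p.eval l.1 * hd3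
    linarith
  rw [← sign_eq_neg_one_iff, sign_mul, hsign l hl.1, hsign r hr.1, ← sign_mul,
    sign_eq_neg_one_iff] at hneg
  have hlr : l.2 < r.2 := (lt_iff_lt_of_cmp_eq_cmp (hM r hr.1 l hl.1)).1 (hl.2.trans hr.2)
  obtain ⟨ρ', h1, h2, h3⟩ := hS.exists_root_Ioo q hlr hneg
  refine ⟨ρ', h3, fun m hm => ?_⟩
  rcases lt_or_gt_of_ne (hρM m hm) with h | h
  · rw [(cmp_eq_lt_iff _ _).2 h, (cmp_eq_lt_iff _ _).2]
    exact ((le_iff_le_of_cmp_eq_cmp (hM l hl.1 m hm)).1 (hlmax m hm h)).trans_lt h1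
  · rw [(cmp_eq_gt_iff _ _).2 h, (cmp_eq_gt_iff _ _).2]
    exact h2.trans_le ((le_iff_le_of_cmp_eq_cmp (hM m hm r hr.1)).1 (hrmin m hm h))

theorem lt_of_lt_of_compat {R β : Type*} [Field R] [LinearOrder R] [IsStrictOrderedRing R]
    [LinearOrder β] (hR : HasPolyIVT R) {p : R[X]} {M : Finset (R × β)}
    (hder : ∀ c, p.derivative.eval c = 0 → ∃ m ∈ M, m.1 = c) {ρ τ : R} {ρ' τ' : β}
    (hρ : p.eval ρ = 0) (hτ : p.eval τ = 0) (h : Compat M ρ ρ') (h' : Compat M τ τ')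
    (hlt : ρ < τ) : ρ' < τ' := by
  obtain ⟨c, h1, h2, h3⟩ := hR.exists_derivative_eq_zero p hlt hρ hτ
  obtain ⟨m, hm, rfl⟩ := hder c h3
  exact ((lt_iff_lt_of_cmp_eq_cmp (cmp_eq_cmp_symm.1 (h m hm))).1 h1).trans
    ((lt_iff_lt_of_cmp_eq_cmp (h' m hm)).1 h2)

theorem exists_matching_of_bounded (hR : HasPolyIVT R) (hS : HasPolyIVT S) {p : R[X]} {q : S[X]}
    (hp0 : p ≠ 0) (hq0 : q ≠ 0)
    {M : Finset (R × S)} (hM : ∀ m ∈ M, Compat M m.1 m.2)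
    (hsign : ∀ m ∈ M, SignType.sign (p.eval m.1) = SignType.sign (q.eval m.2))
    (hder : ∀ c, p.derivative.eval c = 0 → ∃ m ∈ M, m.1 = c)
    (hder' : ∀ c, q.derivative.eval c = 0 → ∃ m ∈ M, m.2 = c)
    (hlo : ∃ m ∈ M, (∀ ρ, p.eval ρ = 0 → m.1 < ρ) ∧ ∀ ρ, q.eval ρ = 0 → m.2 < ρ)
    (hhi : ∃ m ∈ M, (∀ ρ, p.eval ρ = 0 → ρ < m.1) ∧ ∀ ρ, q.eval ρ = 0 → ρ < m.2) :
    ∃ M' : Finset (R × S), M ⊆ M' ∧ (∀ m ∈ M', Compat M' m.1 m.2) ∧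
      (∀ ρ, p.eval ρ = 0 → ∃ m ∈ M', m.1 = ρ) ∧ (∀ ρ, q.eval ρ = 0 → ∃ m ∈ M', m.2 = ρ) ∧
      ∀ y z, Compat M' y z → SignType.sign (p.eval y) = SignType.sign (q.eval z) := by
  classical
  let N := (p.roots.toFinset ×ˢ q.roots.toFinset).filter fun m => Compat M m.1 m.2
  have hN : ∀ m, m ∈ N ↔ (p.eval m.1 = 0 ∧ q.eval m.2 = 0) ∧ Compat M m.1 m.2 := by
    intro m
    simp [N, hp0, hq0]
  obtain ⟨a, ha, ha1, ha2⟩ := hlo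
  obtain ⟨b, hb, hb1, hb2⟩ := hhi
  have hroot : ∀ ρ, p.eval ρ = 0 → ∃ m ∈ M ∪ N, m.1 = ρ := by
    intro ρ hρ
    obtain ⟨ρ', h1, h2⟩ := exists_compat_root hR hS hM hsign hder hρ ⟨a, ha, ha1 _ hρ⟩
      ⟨b, hb, hb1 _ hρ⟩
    exact ⟨(ρ, ρ'), Finset.mem_union_right _ ((hN _).2 ⟨⟨hρ, h1⟩, h2⟩), rfl⟩
  have hroot' : ∀ ρ, q.eval ρ = 0 → ∃ m ∈ M ∪ N, m.2 = ρ := by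
    intro ρ hρ
    obtain ⟨ρ', h1, h2⟩ := exists_compat_root hS hR (p := q) (q := p) (M := M.image Prod.swap)
      (ρ := ρ)
      (by
        intro m hm
        obtain ⟨n, hn, rfl⟩ := Finset.mem_image.1 hm
        exact (hM n hn).image_swap)
      (by
        intro m hm
        obtain ⟨n, hn, rfl⟩ := Finset.mem_image.1 hm
        exact (hsign n hn).symm)
      (by
        intro c hc
        obtain ⟨m, hm, rfl⟩ := hder' c hc
        exact ⟨m.swap, Finset.mem_image_of_mem _ hm, rfl⟩)
      hρ ⟨a.swap, Finset.mem_image_of_mem _ ha, ha2 _ hρ⟩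
      ⟨b.swap, Finset.mem_image_of_mem _ hb, hb2 _ hρ⟩
    exact ⟨(ρ', ρ), Finset.mem_union_right _ ((hN _).2 ⟨⟨h1, hρ⟩, h2.of_image_swap⟩), rfl⟩
  have hlt : ∀ m ∈ N, ∀ n ∈ N, m.1 < n.1 → m.2 < n.2 := by
    intro m hm n hn
    rw [hN] at hm hn
    exact lt_of_lt_of_compat hR hder hm.1.1 hn.1.1 hm.2 hn.2
  have hlt' : ∀ m ∈ N, ∀ n ∈ N, m.2 < n.2 → m.1 < n.1 := by
    intro m hm n hn
    rw [hN] at hm hn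
    refine lt_of_lt_of_compat hS (M := M.image Prod.swap) (fun c hc => ?_) hm.1.2 hn.1.2
      hm.2.image_swap hn.2.image_swap
    obtain ⟨m, hm, rfl⟩ := hder' c hc
    exact ⟨m.swap, Finset.mem_image_of_mem _ hm, rfl⟩
  have hiso : ∀ m ∈ M ∪ N, Compat (M ∪ N) m.1 m.2 := by
    intro m hm n hn
    rcases Finset.mem_union.1 hm with hm | hm <;> rcases Finset.mem_union.1 hn with hn | hn
    · exact hM m hm n hn
    · exact cmp_eq_cmp_symm.1 (((hN n).1 hn).2 m hm)
    · exact ((hN m).1 hm).2 n hn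
    · exact cmp_eq_cmp_of_lt_iff_lt ⟨hlt n hn m hm, hlt' n hn m hm⟩
        ⟨hlt m hm n hn, hlt' m hm n hn⟩
  have hsign' : ∀ m ∈ M ∪ N, SignType.sign (p.eval m.1) = SignType.sign (q.eval m.2) := by
    intro m hm
    rcases Finset.mem_union.1 hm with hm | hm
    · exact hsign m hm
    · rw [((hN m).1 hm).1.1, ((hN m).1 hm).1.2, sign_zero, sign_zero]
  refine ⟨M ∪ N, Finset.subset_union_left, hiso, hroot, hroot', fun y z hyz => ?_⟩
  by_cases hy : ∃ m ∈ M ∪ N, m.1 = y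
  · obtain ⟨m, hm, rfl⟩ := hy
    rw [← (eq_iff_eq_of_cmp_eq_cmp (hyz m hm)).1 rfl]
    exact hsign' m hm
  have hz : ¬ ∃ m ∈ M ∪ N, m.2 = z := by
    rintro ⟨m, hm, rfl⟩
    exact hy ⟨m, hm, (eq_iff_eq_of_cmp_eq_cmp (hyz m hm)).2 rfl⟩
  have hpy : p.eval y ≠ 0 := fun h => hy (hroot y h)
  have hqz : q.eval z ≠ 0 := fun h => hz (hroot' z h)
  obtain ⟨d, hd, hd0, hdρ⟩ := exists_mem_no_root hR (M.image Prod.fst)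
    (fun c hc => Finset.mem_image.2 (hder c hc)) ⟨a.1, Finset.mem_image_of_mem _ ha, ha1⟩
    ⟨b.1, Finset.mem_image_of_mem _ hb, hb1⟩
    (fun h => by
      obtain ⟨m, hm, h⟩ := Finset.mem_image.1 h
      exact hy ⟨m, Finset.mem_union_left _ hm, h⟩) hpy
  obtain ⟨m, hm, rfl⟩ := Finset.mem_image.1 hd
  rw [← sign_eq_sign_of_no_root hR hdρ hd0 hpy, hsign m hm]
  refine sign_eq_sign_of_no_root hS (fun ρ hρ => ?_) (fun h => hd0 ?_) hqz
  · obtain ⟨n, hn, rfl⟩ := hroot' ρ hρ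
    have h0 : p.eval n.1 = 0 := by
      rw [← sign_eq_zero_iff, hsign' n hn, hρ, sign_zero]
    rw [← lt_iff_lt_of_cmp_eq_cmp (hiso n hn m (Finset.mem_union_left _ hm)), hdρ _ h0]
    exact lt_iff_lt_of_cmp_eq_cmp (cmp_eq_cmp_symm.1 (hyz n hn))
  · rw [← sign_eq_zero_iff, hsign m hm, h, sign_zero]

end Matching

section Matching

open Polynomial

theorem Compat.insert {α β : Type*} [LinearOrder α] [LinearOrder β] {M : Finset (α × β)} {y : α}
    {z : β} (h : Compat M y z) (hM : ∀ m ∈ M, Compat M m.1 m.2) :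
    ∀ m ∈ insert (y, z) M, Compat (insert (y, z) M) m.1 m.2 := by
  intro m hm n hn
  rcases Finset.mem_insert.1 hm with rfl | hm <;> rcases Finset.mem_insert.1 hn with rfl | hn
  · simp
  · exact h n hn
  · exact cmp_eq_cmp_symm.1 (h m hm)
  · exact hM m hm n hn

theorem exists_bot_sign_eval_eq {R : Type*} [Field R] [LinearOrder R] [IsStrictOrderedRing R]
    {p : R[X]} (hp : p ≠ 0) (F : Finset R) : ∃ a, (∀ x ∈ F, a < x) ∧ (∀ ρ, p.eval ρ = 0 → a < ρ) ∧
      SignType.sign (p.eval a) = SignType.sign ((-1) ^ p.natDegree * p.leadingCoeff) := by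
  obtain ⟨B, hB⟩ := exists_sign_eval_eq_bot p
  obtain ⟨a, ha⟩ : ∃ a, ∀ x ∈ insert B (F ∪ p.roots.toFinset), a ≤ x :=
    (insert B (F ∪ p.roots.toFinset)).bddBelow
  refine ⟨a - 1, fun x hx => ?_, fun ρ hρ => ?_, hB _ ?_⟩
  · linarith [ha x (by simp [hx])]
  · linarith [ha ρ (by simp [hp, hρ])]
  · linarith [ha B (by simp)]

theorem exists_top_sign_eval_eq {R : Type*} [Field R] [LinearOrder R] [IsStrictOrderedRing R]
    {p : R[X]} (hp : p ≠ 0) (F : Finset R) : ∃ a, (∀ x ∈ F, x < a) ∧ (∀ ρ, p.eval ρ = 0 → ρ < a) ∧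
      SignType.sign (p.eval a) = SignType.sign p.leadingCoeff := by
  obtain ⟨B, hB⟩ := exists_sign_eval_eq_top p
  obtain ⟨a, ha⟩ : ∃ a, ∀ x ∈ insert B (F ∪ p.roots.toFinset), x ≤ a :=
    (insert B (F ∪ p.roots.toFinset)).bddAbove
  refine ⟨a + 1, fun x hx => ?_, fun ρ hρ => ?_, hB _ ?_⟩
  · linarith [ha x (by simp [hx])]
  · linarith [ha ρ (by simp [hp, hρ])]
  · linarith [ha B (by simp)]

variable {R S : Type*} [Field R] [LinearOrder R] [Field S] [LinearOrder S]

/-- The finite monotone matching `M` contains all roots of the pairs of polynomials in `E`, and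
determines their signs. -/
structure Matching (M : Finset (R × S)) (E : Set (R[X] × S[X])) : Prop where
  compat : ∀ m ∈ M, Compat M m.1 m.2
  zero_iff : ∀ e ∈ E, e.1 = 0 ↔ e.2 = 0
  root_left : ∀ e ∈ E, e.1 ≠ 0 → ∀ y, e.1.eval y = 0 → ∃ m ∈ M, m.1 = y
  root_right : ∀ e ∈ E, e.2 ≠ 0 → ∀ z, e.2.eval z = 0 → ∃ m ∈ M, m.2 = z
  sign_eq : ∀ e ∈ E, ∀ y z, Compat M y z →
    SignType.sign (e.1.eval y) = SignType.sign (e.2.eval z)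

namespace Matching

theorem mono {M : Finset (R × S)} {E F : Set (R[X] × S[X])} (h : Matching M E) (hF : F ⊆ E) :
    Matching M F where
  compat := h.compat
  zero_iff e he := h.zero_iff e (hF he)
  root_left e he := h.root_left e (hF he)
  root_right e he := h.root_right e (hF he)
  sign_eq e he := h.sign_eq e (hF he)

variable [IsStrictOrderedRing S]

theorem restrict (hS : HasPolyIVT S) {M : Finset (R × S)} {E : Set (R[X] × S[X])}
    (h : Matching M E) :
    ∃ N ⊆ M, Matching N E ∧ ∀ m ∈ N, ∃ e ∈ E, e.1 ≠ 0 ∧ e.1.eval m.1 = 0 := by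
  classical
  let N := M.filter fun m => ∃ e ∈ E, e.1 ≠ 0 ∧ e.1.eval m.1 = 0
  have hN : ∀ m, m ∈ N ↔ m ∈ M ∧ ∃ e ∈ E, e.1 ≠ 0 ∧ e.1.eval m.1 = 0 := by simp [N]
  have hright : ∀ e ∈ E, e.2 ≠ 0 → ∀ z, e.2.eval z = 0 → ∃ m ∈ N, m.2 = z := by
    intro e he h0 z hz
    obtain ⟨m, hm, rfl⟩ := h.root_right e he h0 z hz
    refine ⟨m, (hN m).2 ⟨hm, e, he, fun h => h0 ((‹Matching M E›.zero_iff e he).1 h), ?_⟩, rfl⟩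
    rw [← sign_eq_zero_iff, h.sign_eq e he _ _ (h.compat m hm), hz, sign_zero]
  refine ⟨N, Finset.filter_subset _ _, ⟨fun m hm n hn => ?_, h.zero_iff, fun e he h0 y hy => ?_,
    hright, fun e he y z hyz => ?_⟩, fun m hm => ((hN m).1 hm).2⟩
  · exact h.compat m ((hN m).1 hm).1 n ((hN n).1 hn).1
  · obtain ⟨m, hm, rfl⟩ := h.root_left e he h0 y hy
    exact ⟨m, (hN m).2 ⟨hm, e, he, h0, hy⟩, rfl⟩
  · by_cases h0 : e.2 = 0
    · rw [h0, (h.zero_iff e he).2 h0]; simp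
    obtain ⟨z', hz'⟩ := Order.PartialIso.exists_across (α := R) (β := S)
      ⟨M, fun p hp q hq => h.compat q hq p hp⟩ y
    rw [h.sign_eq e he y z' hz']
    by_contra hne
    obtain ⟨w, hw, hw0⟩ := hS.exists_root_uIcc_of_sign_ne e.2 hne
    obtain ⟨m, hm, rfl⟩ := hright e he h0 w hw0
    have h1 := (hyz m hm).symm.trans (hz' m ((hN m).1 hm).1)
    rcases lt_trichotomy z z' with hlt | rfl | hlt
    · rw [Set.uIcc_of_ge hlt.le] at hw
      have := (le_iff_le_of_cmp_eq_cmp h1).2 hw.2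
      have hz : z = m.2 := le_antisymm hw.1 this
      have hz2 := (eq_iff_eq_of_cmp_eq_cmp h1).1 hz.symm
      exact hlt.ne (hz.trans hz2)
    · exact hne rfl
    · rw [Set.uIcc_of_le hlt.le] at hw
      have := (le_iff_le_of_cmp_eq_cmp h1).1 hw.2
      have hz : z' = m.2 := le_antisymm hw.1 this
      have hz2 := (eq_iff_eq_of_cmp_eq_cmp h1).2 hz.symm
      exact hlt.ne (hz.trans hz2)

variable [IsStrictOrderedRing R]

theorem exists_insert (hR : HasPolyIVT R) (hS : HasPolyIVT S) {M : Finset (R × S)}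
    {E F : Set (R[X] × S[X])} (hM : Matching M E) (hF : F ⊆ E) {p : R[X]} {q : S[X]}
    (hp : p ≠ 0) (hq : q ≠ 0) (hder : (p.derivative, q.derivative) ∈ F)
    (hdeg : p.natDegree = q.natDegree)
    (hlc : SignType.sign p.leadingCoeff = SignType.sign q.leadingCoeff)
    (hrem : ∀ e ∈ F, e.1 ≠ 0 → ∃ r ∈ E,
      (∀ y, e.1.eval y = 0 → SignType.sign (p.eval y) = SignType.sign (r.1.eval y)) ∧
      ∀ z, e.2.eval z = 0 → SignType.sign (q.eval z) = SignType.sign (r.2.eval z)) :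
    ∃ M' : Finset (R × S), Matching M' (insert (p, q) F) := by
  classical
  obtain ⟨N, hNM, hN, hNroot⟩ := (hM.mono hF).restrict hS
  rcases Nat.eq_zero_or_pos p.natDegree with h0 | hpos
  · obtain ⟨c, rfl⟩ := natDegree_eq_zero.1 h0
    obtain ⟨d, rfl⟩ := natDegree_eq_zero.1 (hdeg ▸ h0)
    rw [leadingCoeff_C, leadingCoeff_C] at hlc
    rw [Ne, C_eq_zero] at hp hq
    refine ⟨N, hN.compat, ?_, ?_, ?_, ?_⟩
    · rintro e (rfl | he)
      · simp [hp, hq]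
      · exact hN.zero_iff e he
    · rintro e (rfl | he)
      · simp [hp]
      · exact hN.root_left e he
    · rintro e (rfl | he)
      · simp [hq]
      · exact hN.root_right e he
    · rintro e (rfl | he)
      · simp [hlc]
      · exact hN.sign_eq e he
  have hp' : p.derivative ≠ 0 := fun h => hpos.ne' (derivative_eq_zero.1 h)
  have hq' : q.derivative ≠ 0 := fun h =>
    hpos.ne' (hdeg ▸ derivative_eq_zero.1 h)
  have hNsign : ∀ m ∈ N, SignType.sign (p.eval m.1) = SignType.sign (q.eval m.2) := by
    intro m hm
    obtain ⟨e, he, h1, h2⟩ := hNroot m hm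
    obtain ⟨r, hr, h3, h4⟩ := hrem e he h1
    have : e.2.eval m.2 = 0 := by
      rw [← sign_eq_zero_iff, ← hN.sign_eq e he _ _ (hN.compat m hm), h2, sign_zero]
    rw [h3 _ h2, h4 _ this, hM.sign_eq r hr _ _ (hM.compat m (hNM hm))]
  obtain ⟨a, ha1, ha2, ha3⟩ := exists_bot_sign_eval_eq hp (N.image Prod.fst)
  obtain ⟨b, hb1, hb2, hb3⟩ := exists_bot_sign_eval_eq hq (N.image Prod.snd)
  have hab : Compat N a b := fun m hm => by
    rw [(cmp_eq_gt_iff _ _).2 (ha1 _ (Finset.mem_image_of_mem _ hm)),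
      (cmp_eq_gt_iff _ _).2 (hb1 _ (Finset.mem_image_of_mem _ hm))]
  have hN₁ := hab.insert hN.compat
  obtain ⟨c, hc1, hc2, hc3⟩ := exists_top_sign_eval_eq hp ((insert (a, b) N).image Prod.fst)
  obtain ⟨d, hd1, hd2, hd3⟩ := exists_top_sign_eval_eq hq ((insert (a, b) N).image Prod.snd)
  have hcd : Compat (insert (a, b) N) c d := fun m hm => by
    rw [(cmp_eq_lt_iff _ _).2 (hc1 _ (Finset.mem_image_of_mem _ hm)),
      (cmp_eq_lt_iff _ _).2 (hd1 _ (Finset.mem_image_of_mem _ hm))]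
  have hN₂ := hcd.insert hN₁
  have hsub : N ⊆ insert (c, d) (insert (a, b) N) :=
    (Finset.subset_insert _ _).trans (Finset.subset_insert _ _)
  obtain ⟨M', hM'sub, hM', hl, hr, hs⟩ := exists_matching_of_bounded hR hS hp hq hN₂
    (by
      intro m hm
      rcases Finset.mem_insert.1 hm with rfl | hm
      · rw [hc3, hd3, hlc]
      rcases Finset.mem_insert.1 hm with rfl | hm
      · rw [ha3, hb3, hdeg, sign_mul, sign_mul, hlc]
        rcases Nat.even_or_odd q.natDegree with h | h <;> simp [h.neg_one_pow]
      · exact hNsign m hm)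
    (fun y hy => by
      obtain ⟨m, hm, h⟩ := hN.root_left _ hder hp' y hy
      exact ⟨m, hsub hm, h⟩)
    (fun y hy => by
      obtain ⟨m, hm, h⟩ := hN.root_right _ hder hq' y hy
      exact ⟨m, hsub hm, h⟩)
    ⟨(a, b), by simp, ha2, hb2⟩ ⟨(c, d), by simp, hc2, hd2⟩
  refine ⟨M', hM', ?_, ?_, ?_, ?_⟩
  · rintro e (rfl | he)
    · simp [hp, hq]
    · exact hN.zero_iff e he
  · rintro e (rfl | he) h0 y hy
    · exact hl y hy
    · obtain ⟨m, hm, h⟩ := hN.root_left e he h0 y hy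
      exact ⟨m, hM'sub (hsub hm), h⟩
  · rintro e (rfl | he) h0 y hy
    · exact hr y hy
    · obtain ⟨m, hm, h⟩ := hN.root_right e he h0 y hy
      exact ⟨m, hM'sub (hsub hm), h⟩
  · rintro e (rfl | he) y z hyz
    · exact hs y z hyz
    · exact hN.sign_eq e he y z fun m hm => hyz m (hM'sub (hsub hm))

end Matching

end Matching

section Transfer

open Polynomial Filter

variable {R S D B : Type*} [Field R] [LinearOrder R] [IsStrictOrderedRing R]
  [Field S] [LinearOrder S] [IsStrictOrderedRing S] [CommRing D]

theorem map_eq_map_eraseLead {R D : Type*} [Semiring R] [Semiring D] {φ : D →+* R} {p : D[X]}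
    (h : φ p.leadingCoeff = 0) : p.map φ = p.eraseLead.map φ := by
  conv_lhs => rw [← p.eraseLead_add_monomial_natDegree_leadingCoeff]
  rw [Polynomial.map_add, map_monomial, h, monomial_zero_right, add_zero]

/-- At the roots of `f`, the polynomials `p` and `r` have the same sign. -/
def SignEqAtRoots (φ : D →+* R) (f p r : D[X]) : Prop :=
  ∀ y, (f.map φ).eval y = 0 →
    SignType.sign ((p.map φ).eval y) = SignType.sign ((r.map φ).eval y)

theorem signEqAtRoots_pseudoRem (φ : D →+* R) {f p : D[X]} (hf : φ f.leadingCoeff ≠ 0) (g : D[X]) :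
    SignEqAtRoots φ f p (C (f.leadingCoeff ^ 2) * p - g * f) := by
  intro y hy
  simp only [Polynomial.map_sub, Polynomial.map_mul, map_C, eval_sub, eval_mul, eval_C, hy,
    mul_zero, sub_zero, sign_mul]
  rw [map_pow, sign_pos (show 0 < φ f.leadingCoeff ^ 2 by positivity), one_mul]

variable [IsDomain D]

theorem exists_signEqAtRoots {φ : D →+* R} {l : Filter B} {ψ : B → D →+* S}
    (hl : ∀ g, ∀ᶠ b in l, SignType.sign (ψ b g) = SignType.sign (φ g)) (f p : D[X])
    (hf : f.map φ ≠ 0) : ∃ r : D[X], r.degree < f.degree ∧ SignEqAtRoots φ f p r ∧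
      ∀ᶠ b in l, SignEqAtRoots (ψ b) f p r := by
  induction hn : f.natDegree using Nat.strong_induction_on generalizing f with
  | _ n ih =>
  have hf0 : f ≠ 0 := by rintro rfl; simp at hf
  by_cases hlc : φ f.leadingCoeff = 0
  · have hmap := map_eq_map_eraseLead hlc
    have hlt : f.eraseLead.degree < f.degree := degree_eraseLead_lt hf0
    have h0 : f.eraseLead ≠ 0 := by
      intro h; apply hf; rw [hmap, h, Polynomial.map_zero]
    obtain ⟨r, h1, h2, h3⟩ := ih _ (hn ▸ natDegree_lt_natDegree h0 hlt) f.eraseLead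
      (hmap ▸ hf) rfl
    refine ⟨r, h1.trans hlt, fun y hy => h2 y (hmap ▸ hy), ?_⟩
    filter_upwards [h3, hl f.leadingCoeff] with b hb hb'
    rw [hlc, sign_zero, sign_eq_zero_iff] at hb'
    exact fun y hy => hb y (map_eq_map_eraseLead hb' ▸ hy)
  clear ih hn
  have hlc' : ∀ᶠ b in l, ψ b f.leadingCoeff ≠ 0 := by
    filter_upwards [hl f.leadingCoeff] with b hb h
    rw [h, sign_zero, eq_comm, sign_eq_zero_iff] at hb
    exact hlc hb
  induction hn : p.natDegree using Nat.strong_induction_on generalizing p with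
  | _ n ih =>
  by_cases hdeg : p.degree < f.degree
  · exact ⟨p, hdeg, fun _ _ => rfl, Eventually.of_forall fun _ _ _ => rfl⟩
  have hp0 : p ≠ 0 := by
    rintro rfl
    exact hdeg (by rw [degree_zero, bot_lt_iff_ne_bot, Ne, degree_eq_bot]; exact hf0)
  have hlf : f.leadingCoeff ≠ 0 := leadingCoeff_ne_zero.2 hf0
  have hlp : p.leadingCoeff ≠ 0 := leadingCoeff_ne_zero.2 hp0
  have hle : f.natDegree ≤ p.natDegree := natDegree_le_natDegree (not_lt.1 hdeg)
  let g : D[X] := C (f.leadingCoeff * p.leadingCoeff) * X ^ (p.natDegree - f.natDegree)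
  let p₁ := C (f.leadingCoeff ^ 2) * p - g * f
  have hA : ∀ φ' : D →+* R, φ' f.leadingCoeff ≠ 0 → SignEqAtRoots φ' f p p₁ :=
    fun φ' h => signEqAtRoots_pseudoRem φ' h g
  have hB : ∀ φ' : D →+* S, φ' f.leadingCoeff ≠ 0 → SignEqAtRoots φ' f p p₁ :=
    fun φ' h => signEqAtRoots_pseudoRem φ' h g
  have hd1 : (C (f.leadingCoeff ^ 2) * p).degree = p.degree := degree_C_mul (pow_ne_zero 2 hlf)
  have hlt : p₁.degree < p.degree := by
    refine (degree_sub_lt_left ?_ ?_ ?_).trans_eq hd1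
    · rw [hd1, degree_mul, degree_C_mul_X_pow _ (mul_ne_zero hlf hlp), degree_eq_natDegree hp0,
        degree_eq_natDegree hf0, ← Nat.cast_add, Nat.sub_add_cancel hle]
    · exact mul_ne_zero (C_ne_zero.2 (pow_ne_zero 2 hlf)) hp0
    · rw [leadingCoeff_mul, leadingCoeff_mul, leadingCoeff_C, leadingCoeff_C_mul_X_pow]
      ring
  by_cases hp₁ : p₁ = 0
  · refine ⟨0, ?_, hp₁ ▸ hA φ hlc, ?_⟩
    · rw [degree_zero, bot_lt_iff_ne_bot, Ne, degree_eq_bot]; exact hf0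
    · filter_upwards [hlc'] with b hb
      exact hp₁ ▸ hB (ψ b) hb
  obtain ⟨r, h1, h2, h3⟩ := ih _ (hn ▸ natDegree_lt_natDegree hp₁ hlt) p₁ rfl
  refine ⟨r, h1, fun y hy => (hA φ hlc y hy).trans (h2 y hy), ?_⟩
  filter_upwards [h3, hlc'] with b hb hb' y hy
  exact (hB _ hb' y hy).trans (hb y hy)

theorem eventually_exists_matching (hR : HasPolyIVT R) (hS : HasPolyIVT S) {φ : D →+* R}
    {l : Filter B} {ψ : B → D →+* S}
    (hl : ∀ g, ∀ᶠ b in l, SignType.sign (ψ b g) = SignType.sign (φ g)) (E : Finset D[X]) :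
    ∀ᶠ b in l, ∃ M : Finset (R × S), Matching M ((fun p : D[X] => (p.map φ, p.map (ψ b))) '' E) := by
  classical
  suffices ∀ n : ℕ, ∀ E : Finset D[X], (∀ p ∈ E, p.degree < n) → ∀ᶠ b in l,
      ∃ M : Finset (R × S), Matching M ((fun p : D[X] => (p.map φ, p.map (ψ b))) '' E) by
    refine this (E.sup natDegree + 1) E fun p hp => ?_
    refine degree_le_natDegree.trans_lt ?_
    exact_mod_cast Nat.lt_succ_of_le (Finset.le_sup (f := natDegree) hp)
  intro n
  induction n with
  | zero =>
    intro E hE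
    refine Eventually.of_forall fun b => ⟨∅, ?_⟩
    have h0 : ∀ p ∈ E, p = 0 := fun p hp => by
      have := hE p hp
      rwa [Nat.cast_zero, ← not_le, zero_le_degree_iff, not_not] at this
    constructor
    · simp
    all_goals
      rintro _ ⟨p, hp, rfl⟩
      rw [h0 p hp]
      simp
  | succ n ihn =>
  suffices ∀ H : Finset D[X], (∀ p ∈ H, p.degree < (n + 1 : ℕ)) → ∀ L : Finset D[X],
      (∀ p ∈ L, p.degree < n) → ∀ᶠ b in l, ∃ M : Finset (R × S),
        Matching M ((fun p : D[X] => (p.map φ, p.map (ψ b))) '' (L ∪ H : Finset D[X])) by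
    intro E hE
    simpa using this E hE ∅ (by simp)
  intro H
  induction H using Finset.induction_on with
  | empty =>
    intro _ L hL
    simpa using ihn L hL
  | insert p H _ ihH =>
    intro hH L hL
    have ihH := ihH fun p hp => hH p (Finset.mem_insert_of_mem hp)
    by_cases hpn : p.degree < n
    · have := ihH (insert p L) fun q hq => by
        rcases Finset.mem_insert.1 hq with rfl | hq
        · exact hpn
        · exact hL q hq
      rwa [Finset.insert_union, ← Finset.union_insert] at this
    have hp0 : p ≠ 0 := by rintro rfl; simp at hpn
    have hpdeg := hH p (Finset.mem_insert_self _ _)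
    have hple : p.degree ≤ n := by
      rw [degree_eq_natDegree hp0] at hpdeg ⊢
      exact_mod_cast Nat.lt_succ_iff.1 (by exact_mod_cast hpdeg)
    by_cases hlc : φ p.leadingCoeff = 0
    · filter_upwards [hl p.leadingCoeff, ihH (insert p.eraseLead L) fun q hq => by
        rcases Finset.mem_insert.1 hq with rfl | hq
        · exact (degree_eraseLead_lt hp0).trans_le hple
        · exact hL q hq] with b hb hM
      rw [hlc, sign_zero, sign_eq_zero_iff] at hb
      obtain ⟨M, hM⟩ := hM
      refine ⟨M, hM.mono ?_⟩
      rintro _ ⟨q, hq, rfl⟩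
      simp only [Finset.coe_union, Finset.coe_insert, Set.mem_union, Set.mem_insert_iff] at hq
      rcases hq with hq | rfl | hq
      · exact ⟨q, by simp_all, rfl⟩
      · refine ⟨q.eraseLead, by simp, ?_⟩
        simp only [← map_eq_map_eraseLead hlc, ← map_eq_map_eraseLead hb]
      · exact ⟨q, by simp_all, rfl⟩
    have hex : ∀ f : D[X], ∃ r : D[X], (f.map φ ≠ 0 → r.degree < f.degree ∧
        SignEqAtRoots φ f p r ∧ ∀ᶠ b in l, SignEqAtRoots (ψ b) f p r) ∧
        (f.map φ = 0 → r = 0) := by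
      intro f
      by_cases hf : f.map φ = 0
      · exact ⟨0, fun h => absurd hf h, fun _ => rfl⟩
      · obtain ⟨r, hr⟩ := exists_signEqAtRoots hl f p hf
        exact ⟨r, fun _ => hr, fun h => absurd h hf⟩
    choose rem hrem hrem0 using hex
    let F := insert p.derivative (L ∪ H)
    have hder : p.derivative.degree < n := (degree_derivative_lt hp0).trans_le hple
    have hFdeg : ∀ f ∈ F, f.degree ≤ n := by
      intro f hf
      rcases Finset.mem_insert.1 hf with rfl | hf
      · exact hder.le
      rcases Finset.mem_union.1 hf with hf | hf
      · exact (hL f hf).le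
      · have := hH f (Finset.mem_insert_of_mem hf)
        rcases eq_or_ne f 0 with rfl | hf0
        · simp
        rw [degree_eq_natDegree hf0] at this ⊢
        exact_mod_cast Nat.lt_succ_iff.1 (by exact_mod_cast this)
    have h1 := ihH (insert p.derivative (L ∪ F.image rem)) fun q hq => by
      rcases Finset.mem_insert.1 hq with rfl | hq
      · exact hder
      rcases Finset.mem_union.1 hq with hq | hq
      · exact hL q hq
      · obtain ⟨f, hf, rfl⟩ := Finset.mem_image.1 hq
        by_cases hf0 : f.map φ = 0
        · rw [hrem0 f hf0, degree_zero]; exact WithBot.bot_lt_coe n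
        · exact (hrem f hf0).1.trans_le (hFdeg f hf)
    have h2 : ∀ᶠ b in l, ∀ f ∈ F, f.map φ ≠ 0 → SignEqAtRoots (ψ b) f p (rem f) := by
      rw [Filter.eventually_all_finset]
      intro f _
      by_cases hf0 : f.map φ = 0
      · exact Eventually.of_forall fun b h => absurd hf0 h
      · filter_upwards [(hrem f hf0).2.2] with b hb _ using hb
    filter_upwards [h1, h2, hl p.leadingCoeff] with b hM hb hblc
    obtain ⟨M, hM⟩ := hM
    have hlcb : ψ b p.leadingCoeff ≠ 0 := by
      intro h
      rw [h, sign_zero, eq_comm, sign_eq_zero_iff] at hblc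
      exact hlc hblc
    obtain ⟨M', hM'⟩ := hM.exists_insert hR hS
      (F := (fun p : D[X] => (p.map φ, p.map (ψ b))) '' F) (p := p.map φ) (q := p.map (ψ b))
      (Set.image_mono fun f hf => by
        simp only [F, Finset.coe_insert, Finset.coe_union, Set.mem_insert_iff, Set.mem_union] at hf ⊢
        tauto)
      (fun h => hlc (by rw [leadingCoeff, ← coeff_map, h, coeff_zero]))
      (fun h => hlcb (by rw [leadingCoeff, ← coeff_map, h, coeff_zero]))
      ⟨p.derivative, by simp [F], by simp [derivative_map]⟩
      (by rw [natDegree_map_of_leadingCoeff_ne_zero _ hlc,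
        natDegree_map_of_leadingCoeff_ne_zero _ hlcb])
      (by rw [leadingCoeff_map_of_leadingCoeff_ne_zero _ hlc,
        leadingCoeff_map_of_leadingCoeff_ne_zero _ hlcb, hblc])
      (by
        rintro _ ⟨f, hf, rfl⟩ hf0
        exact ⟨_, ⟨rem f, by
          have : rem f ∈ F.image rem := Finset.mem_image_of_mem _ hf
          simp only [Finset.coe_union, Finset.coe_insert, Set.mem_union, Set.mem_insert_iff,
            Finset.mem_coe]
          tauto, rfl⟩, (hrem f hf0).2.1, hb f hf hf0⟩)
    refine ⟨M', hM'.mono ?_⟩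
    rintro _ ⟨q, hq, rfl⟩
    simp only [Finset.coe_union, Finset.coe_insert, Set.mem_union, Set.mem_insert_iff] at hq
    rcases hq with hq | rfl | hq
    · exact Or.inr ⟨q, by simp_all [F], rfl⟩
    · exact Or.inl rfl
    · exact Or.inr ⟨q, by simp_all [F], rfl⟩

end Transfer

section Real

open MvPolynomial

variable {R : Type*} [Field R] [LinearOrder R] [IsStrictOrderedRing R]

theorem sign_ringHom_real (φ : ℝ →+* R) (c : ℝ) : SignType.sign (φ c) = SignType.sign c := by
  have key : ∀ c : ℝ, 0 < c → 0 < φ c := fun c hc => by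
    rw [← Real.sq_sqrt hc.le, map_pow]
    have : φ √c ≠ 0 := (map_ne_zero φ).2 (Real.sqrt_ne_zero'.2 hc)
    positivity
  rcases lt_trichotomy c 0 with h | rfl | h
  · have := key (-c) (neg_pos.2 h)
    rw [map_neg, neg_pos] at this
    rw [sign_neg h, sign_neg this]
  · simp
  · rw [sign_pos h, sign_pos (key c h)]

theorem exists_real_sign_eq (hR : HasPolyIVT R) (n : ℕ) (φ : MvPolynomial (Fin n) ℝ →+* R)
    (F : Finset (MvPolynomial (Fin n) ℝ)) :
    ∃ b : Fin n → ℝ, ∀ f ∈ F, SignType.sign (eval b f) = SignType.sign (φ f) := by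
  classical
  induction n with
  | zero =>
    refine ⟨0, fun f _ => ?_⟩
    rw [eq_C_of_isEmpty f, eval_C]
    exact (sign_ringHom_real (φ.comp C) _).symm
  | succ n ih =>
    let φ' : MvPolynomial (Fin n) ℝ →+* R := φ.comp (rename Fin.succ).toRingHom
    let l : Filter (Fin n → ℝ) := ⨅ G : Finset (MvPolynomial (Fin n) ℝ),
      Filter.principal {b | ∀ g ∈ G, SignType.sign (eval b g) = SignType.sign (φ' g)}
    have hne : l.NeBot := by
      refine Filter.iInf_neBot_of_directed' (fun G H => ⟨G ∪ H, ?_, ?_⟩) fun G => ?_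
      · exact Filter.principal_mono.2 fun b hb g hg => hb g (Finset.mem_union_left _ hg)
      · exact Filter.principal_mono.2 fun b hb g hg => hb g (Finset.mem_union_right _ hg)
      · exact Filter.principal_neBot_iff.2 (ih φ' G)
    have hl : ∀ g, ∀ᶠ b in l, SignType.sign (eval b g) = SignType.sign (φ' g) := by
      intro g
      refine Filter.mem_iInf_of_mem {g} ?_
      simp
    obtain ⟨b, M, hM⟩ := (eventually_exists_matching hR HasPolyIVT.real hl
      (F.image (finSuccEquiv ℝ n))).exists
    obtain ⟨z, hz⟩ := Order.PartialIso.exists_across (α := R) (β := ℝ)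
      ⟨M, fun p hp q hq => hM.compat q hq p hp⟩ (φ (X 0))
    refine ⟨Fin.cons z b, fun f hf => ?_⟩
    rw [eval_eq_eval_mv_eval']
    rw [← hM.sign_eq _ ⟨finSuccEquiv ℝ n f, by
      rw [Finset.coe_image]; exact Set.mem_image_of_mem _ hf, rfl⟩ (φ (X 0)) z hz]
    congr 1
    have : (Polynomial.eval₂RingHom φ' (φ (X 0))).comp (finSuccEquiv ℝ n).toRingEquiv.toRingHom
        = φ := by
      refine ringHom_ext (fun c => ?_) (Fin.cases ?_ fun i => ?_)
      · simp [φ', finSuccEquiv_apply]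
      · simp [φ', finSuccEquiv_X_zero]
      · simp [φ', finSuccEquiv_X_succ]
    rw [Polynomial.eval_map]
    exact DFunLike.congr_fun this f

end Real

section Archimedean

open MvPolynomial

theorem isPreordering_isSumSq {A : Type*} [CommRing A] : IsPreordering {a : A | IsSumSq a} where
  add := IsSumSq.add
  mul := IsSumSq.mul
  sq a := by simp [pow_two]

/-- The preordering generated by `q`. -/
def preorderingOf {A : Type*} [CommRing A] (q : A) : Set A :=
  {a | ∃ s ∈ {s : A | IsSumSq s}, ∃ t ∈ {t : A | IsSumSq t}, a = s + t * q}

theorem isPreordering_preorderingOf {A : Type*} [CommRing A] (q : A) :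
    IsPreordering (preorderingOf q) :=
  isPreordering_isSumSq.adjoin q

theorem self_mem_preorderingOf {A : Type*} [CommRing A] (q : A) : q ∈ preorderingOf q :=
  ⟨0, IsSumSq.zero, 1, isPreordering_isSumSq.one, by ring⟩

variable {n : ℕ} {T : Set (MvPolynomial (Fin n) ℝ)}

theorem IsPreordering.exists_real_point (hT : IsPreordering T) {f : MvPolynomial (Fin n) ℝ}
    (hf : ∀ k, -f ^ (2 * k) ∉ T) (G : Finset (MvPolynomial (Fin n) ℝ)) (hG : ∀ g ∈ G, g ∈ T) :
    ∃ b : Fin n → ℝ, (∀ g ∈ G, 0 ≤ eval b g) ∧ eval b f ≠ 0 := by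
  classical
  obtain ⟨R, _, _, _, φ, hR, hφ, hφf⟩ := hT.exists_ringHom_hasPolyIVT hf
  obtain ⟨b, hb⟩ := exists_real_sign_eq hR n φ (insert f G)
  refine ⟨b, fun g hg => ?_, fun h => hφf ?_⟩
  · rw [← sign_nonneg_iff, hb g (Finset.mem_insert_of_mem hg), sign_nonneg_iff]
    exact hφ g (hG g hg)
  · rw [← sign_eq_zero_iff, ← hb f (Finset.mem_insert_self _ _), h, sign_zero]

theorem IsPreordering.C_mem (hT : IsPreordering T) {c : ℝ} (hc : 0 ≤ c) : C c ∈ T := by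
  have := hT.sq (C √c)
  rwa [← map_pow, Real.sq_sqrt hc] at this

theorem IsPreordering.sum_mem {A ι : Type*} [CommRing A] {T : Set A} (hT : IsPreordering T)
    {s : Finset ι} {f : ι → A} (hf : ∀ i ∈ s, f i ∈ T) : ∑ i ∈ s, f i ∈ T := by
  classical
  induction s using Finset.induction_on with
  | empty => simpa using hT.zero
  | insert a s ha ih =>
    rw [Finset.sum_insert ha]
    exact hT.add (hf a (by simp)) (ih fun i hi => hf i (by simp [hi]))

theorem IsPreordering.exists_C_sub_mem (hT : IsPreordering T) {N : ℝ}
    (hN : C N - ∑ i, X i ^ 2 ∈ T) (f : MvPolynomial (Fin n) ℝ) :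
    ∃ k : ℝ, 0 ≤ k ∧ C k + f ∈ T ∧ C k - f ∈ T := by
  have key : ∀ k (f : MvPolynomial (Fin n) ℝ), C k + f ∈ T → C k - f ∈ T →
      ∃ k : ℝ, 0 ≤ k ∧ C k + f ∈ T ∧ C k - f ∈ T := by
    intro k f h1 h2
    have hC : (C |k| : MvPolynomial (Fin n) ℝ) = C (|k| - k) + C k := by
      rw [← map_add, sub_add_cancel]
    have hmem := hT.C_mem (sub_nonneg.2 (le_abs_self k))
    refine ⟨|k|, abs_nonneg k, ?_, ?_⟩
    · rw [hC, add_assoc]; exact hT.add hmem h1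
    · rw [hC, add_sub_assoc]; exact hT.add hmem h2
  induction f using MvPolynomial.induction_on with
  | C c =>
    refine ⟨|c|, abs_nonneg c, ?_, ?_⟩
    · rw [← map_add]; exact hT.C_mem (by linarith [neg_abs_le c])
    · rw [← map_sub]; exact hT.C_mem (by linarith [le_abs_self c])
  | add f g hf hg =>
    obtain ⟨k, hk, h1, h2⟩ := hf
    obtain ⟨l, hl, h3, h4⟩ := hg
    refine ⟨k + l, by positivity, ?_, ?_⟩
    · convert hT.add h1 h3 using 1; rw [map_add]; ring
    · convert hT.add h2 h4 using 1; rw [map_add]; ring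
  | mul_X f i hf =>
    obtain ⟨k, hk, h1, h2⟩ := hf
    obtain ⟨l, hl, h3, h4⟩ : ∃ l : ℝ, 0 ≤ l ∧ C l + X i ∈ T ∧ C l - X i ∈ T := by
      have hsum : ∑ j ∈ Finset.univ.erase i, X j ^ 2 ∈ T := hT.sum_mem fun j _ => hT.sq (X j)
      have hsplit := Finset.add_sum_erase Finset.univ
        (fun j : Fin n => (X j ^ 2 : MvPolynomial (Fin n) ℝ)) (Finset.mem_univ i)
      have hhalf : (C (1 / 2) : MvPolynomial (Fin n) ℝ) * C (1 / 2) = C (1 / 4) := by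
        rw [← map_mul]; norm_num
      have hone : (C (1 / 2) : MvPolynomial (Fin n) ℝ) + C (1 / 2) = 1 := by
        rw [← map_add]; norm_num
      refine key (N + 1 / 4) _ ?_ ?_
      · convert hT.add (hT.add hN hsum) (hT.sq (X i + C (1 / 2))) using 1
        rw [map_add, ← hhalf]
        linear_combination (-hsplit - X i * hone)
      · convert hT.add (hT.add hN hsum) (hT.sq (X i - C (1 / 2))) using 1
        rw [map_add, ← hhalf]
        linear_combination (-hsplit + X i * hone)
    have hhalf := hT.C_mem (show (0 : ℝ) ≤ 1 / 2 by norm_num)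
    have hone : (C (1 / 2) : MvPolynomial (Fin n) ℝ) * 2 = 1 := by
      rw [show (2 : MvPolynomial (Fin n) ℝ) = C 2 from rfl, ← map_mul]; norm_num
    refine ⟨k * l, by positivity, ?_, ?_⟩
    · convert hT.mul hhalf (hT.add (hT.mul h1 h3) (hT.mul h2 h4)) using 1
      rw [map_mul]
      linear_combination -(C k * C l + f * X i) * hone
    · convert hT.mul hhalf (hT.add (hT.mul h1 h4) (hT.mul h2 h3)) using 1
      rw [map_mul]
      linear_combination -(C k * C l - f * X i) * hone

theorem exists_mul_eq_one_add {q f : MvPolynomial (Fin n) ℝ}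
    (hf : ∀ x, 0 ≤ eval x q → 0 < eval x f) :
    ∃ s ∈ preorderingOf q, ∃ t ∈ preorderingOf q, f * t = 1 + s := by
  classical
  have hT := isPreordering_preorderingOf q
  by_contra! hcon
  obtain ⟨b, hb, -⟩ := (hT.adjoin (-f)).exists_real_point (f := 1)
    (by
      rintro k ⟨s, hs, t, ht, h⟩
      exact hcon s hs t ht (by rw [one_pow] at h; linear_combination h)) {q, -f}
    (by
      intro g hg
      rcases Finset.mem_insert.1 hg with rfl | hg
      · exact ⟨_, self_mem_preorderingOf _, 0, hT.zero, by ring⟩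
      · rw [Finset.mem_singleton.1 hg]
        exact ⟨0, hT.zero, 1, hT.one, by ring⟩)
  have h1 := hb q (by simp)
  have h2 := hb (-f) (by simp)
  rw [map_neg] at h2
  linarith [hf b h1]

theorem exists_C_sub_sum_sq_mem_preorderingOf {q : MvPolynomial (Fin n) ℝ}
    (hq : IsCompact {x : Fin n → ℝ | 0 ≤ eval x q}) :
    ∃ N : ℝ, C N - ∑ i, X i ^ 2 ∈ preorderingOf q := by
  have hT := isPreordering_preorderingOf q
  obtain ⟨N, hN0, hN⟩ : ∃ N : ℝ, 0 ≤ N ∧ ∀ x : Fin n → ℝ, 0 ≤ eval x q → ∑ i, x i ^ 2 < N := by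
    have hcont : Continuous fun x : Fin n → ℝ => ∑ i, x i ^ 2 := by fun_prop
    obtain ⟨B, hB⟩ := hq.bddAbove_image hcont.continuousOn
    refine ⟨|B| + 1, by positivity, fun x hx => ?_⟩
    have := hB (Set.mem_image_of_mem _ hx)
    linarith [le_abs_self B]
  let p : MvPolynomial (Fin n) ℝ := C N - ∑ i, X i ^ 2
  obtain ⟨s, hs, t, ht, hst⟩ := exists_mul_eq_one_add (q := q) (f := p) fun x hx => by
    simpa [p, sub_pos] using hN x hx
  obtain ⟨k, hk, -, a, ha, b, hb, hab⟩ := (isPreordering_preorderingOf p).exists_C_sub_mem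
    (self_mem_preorderingOf p) s
  have hsum : ∑ i, X i ^ 2 ∈ preorderingOf q := hT.sum_mem fun i _ => hT.sq (X i)
  have hp1 : p * (1 + s) ∈ preorderingOf q := by
    have := hT.mul (hT.sq p) ht
    rwa [show p ^ 2 * t = p * (1 + s) by rw [← hst]; ring] at this
  have h1 : (C k - s) * (1 + s) ∈ preorderingOf q := by
    have := hT.add (hT.mul (hT.isSumSq ha) (hT.add hT.one hs)) (hT.mul (hT.isSumSq hb) hp1)
    rwa [show a * (1 + s) + b * (p * (1 + s)) = (C k - s) * (1 + s) by rw [hab]; ring] at this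
  have h2 : C (k + k / 2 * (k / 2)) - s ∈ preorderingOf q := by
    have := hT.add h1 (hT.sq (s - C (k / 2)))
    have e : (C (k / 2) + C (k / 2) : MvPolynomial (Fin n) ℝ) = C k := by
      rw [← map_add, add_halves]
    rwa [show (C k - s) * (1 + s) + (s - C (k / 2)) ^ 2 = C (k + k / 2 * (k / 2)) - s by
      rw [map_add, map_mul]; linear_combination -s * e] at this
  have h3 : p + C N * s ∈ preorderingOf q := by
    have := hT.add hp1 (hT.mul hs hsum)
    rwa [show p * (1 + s) + s * ∑ i, X i ^ 2 = p + C N * s by simp only [p]; ring] at this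
  refine ⟨N + N * (k + k / 2 * (k / 2)), ?_⟩
  have := hT.add h3 (hT.mul (hT.C_mem hN0) h2)
  convert this using 1
  simp only [p, map_add, map_mul]
  ring

theorem mem_preorderingOf_of_pos {q f : MvPolynomial (Fin n) ℝ}
    (hq : IsCompact {x : Fin n → ℝ | 0 ≤ eval x q})
    (hf : ∀ x, 0 ≤ eval x q → 0 < eval x f) : f ∈ preorderingOf q := by
  have hT := isPreordering_preorderingOf q
  obtain ⟨N, hN⟩ := exists_C_sub_sum_sq_mem_preorderingOf hq
  obtain ⟨s, hs, t, ht, hst⟩ := exists_mul_eq_one_add hf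
  obtain ⟨k, hk, -, hkt⟩ := hT.exists_C_sub_mem hN t
  obtain ⟨r, hr, hrf, -⟩ := hT.exists_C_sub_mem hN f
  have hk1 : 0 < k + 1 := by positivity
  have hkt' : C (k + 1) - t ∈ preorderingOf q := by
    have := hT.add hkt hT.one
    rwa [show C k - t + 1 = C (k + 1) - t by rw [map_add, map_one]; ring] at this
  have key : ∀ j : ℕ, f + C (j / (k + 1)) ∈ preorderingOf q → f ∈ preorderingOf q := by
    intro j
    induction j with
    | zero => simp
    | succ j ih =>
      intro h
      refine ih ?_
      have hpos : (0 : ℝ) ≤ ((j + 1 : ℕ) : ℝ) / (k + 1) := by positivity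
      have h1 := hT.mul (hT.C_mem (inv_nonneg.2 hk1.le))
        (hT.add (hT.add (hT.mul hkt' h) hs) (hT.mul (hT.C_mem hpos) ht))
      convert h1 using 1
      have e1 : (C (k + 1)⁻¹ * C (k + 1) : MvPolynomial (Fin n) ℝ) = 1 := by
        rw [← map_mul, inv_mul_cancel₀ hk1.ne', map_one]
      have e2 : (C (j / (k + 1)) : MvPolynomial (Fin n) ℝ) =
          C (((j + 1 : ℕ) : ℝ) / (k + 1)) - C (k + 1)⁻¹ := by
        rw [← map_sub]
        congr 1
        push_cast
        field_simp
        ring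
      rw [e2]
      linear_combination (-f - C (((j + 1 : ℕ) : ℝ) / (k + 1))) * e1 + C (k + 1)⁻¹ * hst
  obtain ⟨j, hj⟩ := exists_nat_ge (r * (k + 1))
  refine key j ?_
  have h1 : 0 ≤ (j : ℝ) / (k + 1) - r := sub_nonneg.2 ((le_div_iff₀ hk1).2 hj)
  have := hT.add hrf (hT.C_mem h1)
  rwa [show C r + f + C ((j : ℝ) / (k + 1) - r) = f + C ((j : ℝ) / (k + 1)) by
    rw [map_sub]; ring] at this

end Archimedean

section LocalGlobal

open MvPolynomial

variable {n : ℕ}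

theorem exists_mvPolynomial_near {K : Set (Fin n → ℝ)} (hK : IsCompact K)
    {f : (Fin n → ℝ) → ℝ} (hf : ContinuousOn f K) {ε : ℝ} (hε : 0 < ε) :
    ∃ p : MvPolynomial (Fin n) ℝ, ∀ x ∈ K, |eval x p - f x| < ε := by
  have := isCompact_iff_compactSpace.1 hK
  let φ : MvPolynomial (Fin n) ℝ →ₐ[ℝ] C(K, ℝ) :=
    aeval fun i => ⟨fun x => x.1 i, (continuous_apply i).comp continuous_subtype_val⟩
  have hφ : ∀ p x, φ p x = eval x.1 p := by
    intro p x
    induction p using MvPolynomial.induction_on with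
    | C c => simp [φ]
    | add p q hp hq => simp [hp, hq]
    | mul_X p i hp => simp [hp, φ]
  have hsep : φ.range.SeparatesPoints := by
    intro x y hxy
    obtain ⟨i, hi⟩ := Function.ne_iff.1 (Subtype.coe_ne_coe.2 hxy)
    exact ⟨_, ⟨_, ⟨X i, rfl⟩, rfl⟩, by simpa [φ] using hi⟩
  obtain ⟨⟨_, p, rfl⟩, hp⟩ :=
    ContinuousMap.exists_mem_subalgebra_near_continuous_of_separatesPoints φ.range hsep
      (fun x : K => f x) (continuousOn_iff_continuous_domRestrict.1 hf) ε hε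
  refine ⟨p, fun x hx => ?_⟩
  have := hp ⟨x, hx⟩
  rw [← hφ p ⟨x, hx⟩]
  exact this

theorem mem_preorderingOf_of_eq_add_mul_sq {q h t c : MvPolynomial (Fin n) ℝ}
    (hq : IsCompact {x : Fin n → ℝ | 0 ≤ eval x q}) (hh : ∀ x, 0 ≤ eval x q → 0 ≤ eval x h)
    (ht : t ∈ preorderingOf q) (htc : h = t + c * h ^ 2) : h ∈ preorderingOf q := by
  have hT := isPreordering_preorderingOf q
  have hT0 : ∀ x, 0 ≤ eval x q → 0 ≤ eval x t := by
    obtain ⟨a, ha, b, hb, rfl⟩ := ht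
    intro x hx
    have h1 : ∀ a, IsSumSq a → 0 ≤ eval x a := fun a ha => by
      induction ha with
      | zero => simp
      | sq_add b _ ih => rw [map_add, map_mul]; exact add_nonneg (mul_self_nonneg _) ih
    rw [map_add, map_mul]
    exact add_nonneg (h1 a ha) (mul_nonneg (h1 b hb) hx)
  let g : MvPolynomial (Fin n) ℝ := 1 - c * h
  have hgt : h * g = t := by simp only [g]; linear_combination htc
  have hgx : ∀ x, eval x g = 1 - eval x c * eval x h := by simp [g]
  have hpos : ∀ x ∈ {x : Fin n → ℝ | 0 ≤ eval x q}, 0 < eval x h + eval x g := by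
    intro x hx
    rcases (hh x hx).eq_or_lt with h0 | h0
    · rw [hgx, ← h0]; norm_num
    · have := hT0 x hx
      rw [← hgt, map_mul] at this
      have := nonneg_of_mul_nonneg_right this h0
      linarith
  have hc : ∀ p : MvPolynomial (Fin n) ℝ, Continuous fun x => eval x p :=
    MvPolynomial.continuous_eval
  obtain ⟨M, hM⟩ : ∃ M : ℝ, ∀ x ∈ {x : Fin n → ℝ | 0 ≤ eval x q},
      (|eval x h| + |eval x g|) * (eval x h + eval x g) ≤ M := by
    obtain ⟨M, hM⟩ := hq.bddAbove_image (f := fun x =>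
      (|eval x h| + |eval x g|) * (eval x h + eval x g))
      (((hc h).abs.add (hc g).abs).mul ((hc h).add (hc g))).continuousOn
    exact ⟨M, fun x hx => hM (Set.mem_image_of_mem _ hx)⟩
  obtain ⟨r, hr⟩ := exists_mvPolynomial_near hq
    (f := fun x => (1 - eval x c) / (eval x h + eval x g))
    ((continuous_const.sub (hc c)).continuousOn.div ((hc h).add (hc g)).continuousOn
      fun x hx => (hpos x hx).ne') (ε := (|M| + 1)⁻¹) (by positivity)
  have key : ∀ x, 0 ≤ eval x q → ∀ u, |u| ≤ |eval x h| + |eval x g| →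
      0 < 1 / (eval x h + eval x g) +
        u * (eval x r - (1 - eval x c) / (eval x h + eval x g)) := by
    intro x hx u hu
    have hp := hpos x hx
    have h1 := hr x hx
    set d := eval x r - (1 - eval x c) / (eval x h + eval x g)
    have h2 : |u * d| * (eval x h + eval x g) < 1 := by
      calc |u * d| * (eval x h + eval x g)
          ≤ (|eval x h| + |eval x g|) * |d| * (eval x h + eval x g) := by rw [abs_mul]; gcongr
        _ = (|eval x h| + |eval x g|) * (eval x h + eval x g) * |d| := by ring
        _ ≤ |M| * |d| := by gcongr; exact (hM x hx).trans (le_abs_self _)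
        _ ≤ |M| * (|M| + 1)⁻¹ := by gcongr
        _ < 1 := by rw [← div_eq_mul_inv, div_lt_one (by positivity)]; linarith
    have h3 := (lt_div_iff₀ hp).2 h2
    linarith [neg_abs_le (u * d)]
  have hσ : c + r * g ∈ preorderingOf q := mem_preorderingOf_of_pos hq fun x hx => by
    have := key x hx (eval x g) (by linarith [abs_nonneg (eval x h)])
    convert this using 1
    have := (hpos x hx).ne'
    have e := hgx x
    rw [map_add, map_mul]
    field_simp
    linear_combination e
  have hτ : 1 - r * h ∈ preorderingOf q := mem_preorderingOf_of_pos hq fun x hx => by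
    have := key x hx (-eval x h) (by rw [abs_neg]; linarith [abs_nonneg (eval x g)])
    convert this using 1
    have := (hpos x hx).ne'
    have e := hgx x
    rw [map_sub, map_mul, map_one]
    field_simp
    linear_combination e
  have := hT.add (hT.mul hσ (hT.sq h)) (hT.mul hτ ht)
  convert this using 1
  rw [← hgt]
  simp only [g]
  ring

end LocalGlobal

section LocalSumSq

open scoped Matrix

theorem Ideal.exists_sum_mul_of_mem_mul_span_range {A ι : Type*} [CommRing A] [Fintype ι]
    {I : Ideal A} {w : ι → A} {g : A} (hg : g ∈ I * Ideal.span (Set.range w)) :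
    ∃ b : ι → A, (∀ i, b i ∈ I) ∧ g = ∑ i, b i * w i := by
  rw [← smul_eq_mul, Ideal.span, Submodule.mem_ideal_smul_span_iff_exists_sum] at hg
  obtain ⟨b, hb, rfl⟩ := hg
  exact ⟨b, hb, Finsupp.sum_fintype _ _ (by simp)⟩

theorem exists_isSumSq_sub_mem_span_pow {A ι : Type*} [CommRing A] [Algebra ℝ A] [Fintype ι]
    (w : ι → A) (N : ℕ) {k : ℕ} (hk : 3 ≤ k) {ε : ℝ} (hε : 0 < ε) {g : A}
    (hg : g ∈ Ideal.span (Set.range w) ^ k) :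
    ∃ σ, IsSumSq σ ∧ algebraMap ℝ A ε * ∑ i, w i ^ 2 + g - σ ∈ Ideal.span (Set.range w) ^ N := by
  have hT := isPreordering_isSumSq (A := A)
  have hc : ∀ c : ℝ, 0 ≤ c → IsSumSq (algebraMap ℝ A c) := fun c hc => by
    rw [← Real.mul_self_sqrt hc, map_mul]
    exact IsSumSq.mul_self _
  have hsq : ∀ f : ι → A, IsSumSq (∑ i, f i ^ 2) := fun f => hT.sum_mem fun i _ => hT.sq (f i)
  obtain ⟨d, hd⟩ : ∃ d, N ≤ k + d := ⟨N, by omega⟩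
  induction d generalizing k ε g with
  | zero =>
    refine ⟨_, (hc ε hε.le).mul (hsq w), ?_⟩
    rw [add_sub_cancel_left]
    exact Ideal.pow_le_pow_right (by omega) hg
  | succ d ih =>
    obtain ⟨b, hb, rfl⟩ : ∃ b : ι → A, (∀ i, b i ∈ Ideal.span (Set.range w) ^ (k - 1)) ∧
        g = ∑ i, b i * w i := by
      refine Ideal.exists_sum_mul_of_mem_mul_span_range ?_
      rwa [← pow_succ, Nat.sub_add_cancel (by omega)]
    have hg' : -(algebraMap ℝ A (1 / (2 * ε)) * ∑ i, b i ^ 2) ∈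
        Ideal.span (Set.range w) ^ (k + 1) := by
      refine neg_mem (Ideal.mul_mem_left _ _ (sum_mem fun i _ => ?_))
      have := Ideal.pow_mem_pow (hb i) 2
      rw [← pow_mul] at this
      exact Ideal.pow_le_pow_right (by omega) this
    obtain ⟨σ, hσ, hmem⟩ := ih (by omega) (half_pos hε) hg' (by omega)
    refine ⟨_, ((hc (ε / 2) (half_pos hε).le).mul
      (hsq fun i => w i + algebraMap ℝ A (1 / ε) * b i)).add hσ, ?_⟩
    convert hmem using 1
    have e1 : algebraMap ℝ A ε = algebraMap ℝ A (ε / 2) + algebraMap ℝ A (ε / 2) := by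
      rw [← map_add, add_halves]
    have e2 : algebraMap ℝ A (ε / 2) * algebraMap ℝ A (1 / ε) * 2 = 1 := by
      rw [← map_mul, ← map_ofNat (algebraMap ℝ A) 2, ← map_mul, ← map_one (algebraMap ℝ A)]
      congr 1
      field_simp
    have e3 : algebraMap ℝ A (ε / 2) * algebraMap ℝ A (1 / ε) ^ 2 =
        algebraMap ℝ A (1 / (2 * ε)) := by
      rw [← map_pow, ← map_mul]
      congr 1
      field_simp
    have e4 : ∑ i, (w i + algebraMap ℝ A (1 / ε) * b i) ^ 2 = ∑ i, w i ^ 2 +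
        2 * algebraMap ℝ A (1 / ε) * ∑ i, b i * w i +
        algebraMap ℝ A (1 / ε) ^ 2 * ∑ i, b i ^ 2 := by
      simp only [Finset.mul_sum, ← Finset.sum_add_distrib]
      exact Finset.sum_congr rfl fun i _ => by ring
    rw [e4]
    linear_combination (∑ i, w i ^ 2) * e1 - (∑ i, b i * w i) * e2 - (∑ i, b i ^ 2) * e3

open scoped Matrix.Norms.L2Operator MatrixOrder in
theorem Matrix.PosDef.exists_isUnit_transpose_mul_self {n : Type*} [Fintype n] [DecidableEq n]
    {H : Matrix n n ℝ} (hH : H.PosDef) : ∃ B : Matrix n n ℝ, IsUnit B ∧ H = Bᵀ * B := by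
  obtain ⟨B, hB⟩ := CStarAlgebra.nonneg_iff_eq_star_mul_self.mp hH.posSemidef.nonneg
  rw [Matrix.star_eq_conjTranspose, Matrix.conjTranspose_eq_transpose_of_trivial] at hB
  refine ⟨B, ?_, hB⟩
  have := hH.isUnit
  rw [hB, Matrix.isUnit_iff_isUnit_det, Matrix.det_mul] at this
  exact (Matrix.isUnit_iff_isUnit_det B).2 (isUnit_of_mul_isUnit_right this)

theorem exists_isSumSq_sub_mem_of_posDef {A ι : Type*} [CommRing A] [Algebra ℝ A] [Fintype ι]
    {H : Matrix ι ι ℝ} (hH : H.PosDef) (y : ι → A) (N : ℕ) {h : A}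
    (hh : h - ∑ i, ∑ j, algebraMap ℝ A (H i j) * (y i * y j) ∈ Ideal.span (Set.range y) ^ 3) :
    ∃ σ, IsSumSq σ ∧ h - σ ∈ Ideal.span (Set.range y) ^ N := by
  classical
  obtain ⟨B, hB, rfl⟩ := hH.exists_isUnit_transpose_mul_self
  let w : ι → A := fun k => ∑ i, algebraMap ℝ A (B k i) * y i
  have hspan : Ideal.span (Set.range w) = Ideal.span (Set.range y) := by
    apply le_antisymm
    · rw [Ideal.span_le]
      rintro _ ⟨k, rfl⟩
      exact sum_mem fun i _ => Ideal.mul_mem_left _ _ (Ideal.subset_span ⟨i, rfl⟩)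
    · rw [Ideal.span_le]
      rintro _ ⟨j, rfl⟩
      have : y j = ∑ k, algebraMap ℝ A (B⁻¹ j k) * w k := by
        have h1 := Matrix.nonsing_inv_mul B ((Matrix.isUnit_iff_isUnit_det B).1 hB)
        simp only [w, Finset.mul_sum]
        rw [Finset.sum_comm]
        simp only [← mul_assoc, ← map_mul, ← Finset.sum_mul, ← map_sum]
        simp only [← Matrix.mul_apply, h1, Matrix.one_apply, apply_ite (algebraMap ℝ A), map_one,
          map_zero, ite_mul, one_mul, zero_mul, Finset.sum_ite_eq, Finset.mem_univ, if_true]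
      rw [SetLike.mem_coe, this]
      exact sum_mem fun i _ => Ideal.mul_mem_left _ _ (Ideal.subset_span ⟨i, rfl⟩)
  have hsum : ∑ i, ∑ j, algebraMap ℝ A ((Bᵀ * B) i j) * (y i * y j) = ∑ k, w k ^ 2 := by
    simp only [w, pow_two, Finset.sum_mul_sum, Matrix.mul_apply, Matrix.transpose_apply, map_sum,
      map_mul]
    simp only [Finset.sum_mul]
    rw [Finset.sum_comm (s := Finset.univ (α := ι)) (t := Finset.univ (α := ι))
      (f := fun k i => ∑ j, algebraMap ℝ A (B k i) * y i * (algebraMap ℝ A (B k j) * y j))]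
    refine Finset.sum_congr rfl fun i _ => ?_
    rw [Finset.sum_comm]
    exact Finset.sum_congr rfl fun k _ => Finset.sum_congr rfl fun j _ => by ring
  rw [hsum, ← hspan] at hh
  obtain ⟨σ, hσ, hmem⟩ := exists_isSumSq_sub_mem_span_pow w N le_rfl one_pos hh
  refine ⟨σ, hσ, ?_⟩
  rw [← hspan]
  convert hmem using 1
  rw [map_one]
  ring

theorem exists_isSumSq_sub_mem_iInf {A ι : Type*} [CommRing A] [Finite ι] {I : ι → Ideal A}
    (hI : Pairwise (Function.onFun IsCoprime I)) {h : A}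
    (hh : ∀ i, ∃ σ, IsSumSq σ ∧ h - σ ∈ I i) : ∃ σ, IsSumSq σ ∧ h - σ ∈ ⨅ i, I i := by
  classical
  have := Fintype.ofFinite ι
  have hT := isPreordering_isSumSq (A := A)
  choose σ hσ hmem using hh
  choose e he using fun i => Ideal.exists_forall_sub_mem_ideal hI (Pi.single i (1 : A))
  refine ⟨∑ i, e i ^ 2 * σ i, hT.sum_mem fun i _ => hT.mul (hT.sq _) (hσ i), ?_⟩
  rw [Ideal.mem_iInf]
  intro j
  rw [← Ideal.Quotient.eq, map_sum]
  have he' : ∀ i, Ideal.Quotient.mk (I j) (e i) = if j = i then 1 else 0 := fun i => by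
    rw [(Ideal.Quotient.eq).2 (he i j), Pi.single_apply, apply_ite (Ideal.Quotient.mk (I j)),
      map_one, map_zero]
  simp only [map_mul, map_pow, he', ite_pow, one_pow, ne_eq, two_ne_zero, not_false_eq_true,
    zero_pow, ite_mul, one_mul, zero_mul, Finset.sum_ite_eq, Finset.mem_univ, if_true]
  exact (Ideal.Quotient.eq).2 (hmem j)

end LocalSumSq

section PointIdeal

open MvPolynomial

variable {n : ℕ}

/-- The maximal ideal of polynomials vanishing at `z`. -/
noncomputable def pointIdeal (z : Fin n → ℝ) : Ideal (MvPolynomial (Fin n) ℝ) :=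
  Ideal.span (Set.range fun i => X i - C (z i))

theorem mem_pointIdeal {z : Fin n → ℝ} {g : MvPolynomial (Fin n) ℝ} :
    g ∈ pointIdeal z ↔ eval z g = 0 := by
  constructor
  · intro hg
    have : pointIdeal z ≤ RingHom.ker (eval z) := by
      rw [pointIdeal, Ideal.span_le]
      rintro _ ⟨i, rfl⟩
      simp [RingHom.mem_ker]
    exact this hg
  · intro hg
    have key : ∀ g : MvPolynomial (Fin n) ℝ, g - C (eval z g) ∈ pointIdeal z := by
      intro g
      induction g using MvPolynomial.induction_on with
      | C c => simp
      | add f g hf hg =>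
        convert add_mem hf hg using 1
        rw [map_add, map_add]
        ring
      | mul_X f i hf =>
        convert add_mem (Ideal.mul_mem_right (X i) _ hf) (Ideal.mul_mem_left _ (C (eval z f))
          (Ideal.subset_span ⟨i, rfl⟩ : X i - C (z i) ∈ pointIdeal z)) using 1
        rw [map_mul, map_mul, eval_X]
        ring
    simpa [hg] using key g

theorem isCoprime_pointIdeal {z w : Fin n → ℝ} (h : z ≠ w) :
    IsCoprime (pointIdeal z) (pointIdeal w) := by
  obtain ⟨i, hi⟩ := Function.ne_iff.1 h
  have hi' : w i - z i ≠ 0 := sub_ne_zero.2 (Ne.symm hi)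
  rw [Ideal.isCoprime_iff_exists]
  refine ⟨C (w i - z i)⁻¹ * (X i - C (z i)), mem_pointIdeal.2 (by simp),
    -(C (w i - z i)⁻¹ * (X i - C (w i))), mem_pointIdeal.2 (by simp), ?_⟩
  have : (C (w i - z i)⁻¹ * (C (w i) - C (z i)) : MvPolynomial (Fin n) ℝ) = 1 := by
    rw [← map_sub, ← map_mul, inv_mul_cancel₀ hi', map_one]
  linear_combination this

theorem eval_pderiv_pderiv_mul_mul {z : Fin n → ℝ} {y y' : MvPolynomial (Fin n) ℝ}
    (hy : eval z y = 0) (hy' : eval z y' = 0) (B : MvPolynomial (Fin n) ℝ) (i j : Fin n) :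
    eval z (pderiv i (pderiv j (y * y' * B))) = (eval z (pderiv i y) * eval z (pderiv j y') +
      eval z (pderiv j y) * eval z (pderiv i y')) * eval z B := by
  simp only [Derivation.leibniz, smul_eq_mul, map_add, map_mul, hy, hy']
  ring

theorem exists_isSumSq_sub_mem_pointIdeal_pow {h : MvPolynomial (Fin n) ℝ} {z : Fin n → ℝ}
    (hz : eval z h = 0) (hmin : ∀ᶠ x in nhds z, 0 ≤ eval x h)
    (hH : (Matrix.of fun i j : Fin n => eval z (pderiv i (pderiv j h))).PosDef) (N : ℕ) :
    ∃ σ, IsSumSq σ ∧ h - σ ∈ pointIdeal z ^ N := by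
  let y : Fin n → MvPolynomial (Fin n) ℝ := fun i => X i - C (z i)
  have hy : ∀ i, eval z (y i) = 0 := fun i => by simp [y]
  obtain ⟨g, -, hg⟩ : ∃ g : Fin n → MvPolynomial (Fin n) ℝ,
      (∀ i, g i ∈ (⊤ : Ideal (MvPolynomial (Fin n) ℝ))) ∧ h = ∑ i, g i * y i :=
    Ideal.exists_sum_mul_of_mem_mul_span_range (by
      rw [Ideal.top_mul]; exact mem_pointIdeal.2 hz)
  have hgz : ∀ i, g i ∈ pointIdeal z := by
    intro i
    rw [mem_pointIdeal]
    let γ : ℝ → Fin n → ℝ := fun t => z + t • Pi.single i 1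
    have hγ : Continuous γ := by fun_prop
    have hγ0 : γ 0 = z := by simp [γ]
    have hev : ∀ᶠ t in nhds (0 : ℝ), 0 ≤ t * eval (γ t) (g i) := by
      have : ∀ᶠ t in nhds (0 : ℝ), 0 ≤ eval (γ t) h :=
        hγ.continuousAt.eventually (by rwa [hγ0])
      filter_upwards [this] with t ht
      rw [hg, map_sum, Finset.sum_eq_single i] at ht
      · simpa [y, γ, mul_comm] using ht
      · intro j _ hj
        simp [y, γ, hj]
      · simp
    have hc : Continuous fun t => eval (γ t) (g i) := (continuous_eval (g i)).comp hγ
    have hlim : Filter.Tendsto (fun t => eval (γ t) (g i)) (nhds 0) (nhds (eval z (g i))) := by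
      have := hc.tendsto 0
      rwa [hγ0] at this
    apply le_antisymm
    · refine le_of_tendsto (hlim.mono_left (nhdsWithin_le_nhds (s := Set.Iio 0))) ?_
      filter_upwards [nhdsWithin_le_nhds hev, self_mem_nhdsWithin] with t ht (ht0 : t < 0)
      exact nonpos_of_mul_nonneg_right ht ht0
    · refine ge_of_tendsto (hlim.mono_left (nhdsWithin_le_nhds (s := Set.Ioi 0))) ?_
      filter_upwards [nhdsWithin_le_nhds hev, self_mem_nhdsWithin] with t ht (ht0 : 0 < t)
      exact nonneg_of_mul_nonneg_right ht ht0
  choose B hB using fun i => Ideal.exists_sum_mul_of_mem_mul_span_range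
    (I := ⊤) (w := y) (g := g i) (by rw [Ideal.top_mul]; exact hgz i)
  have hBh : h = ∑ a, ∑ b, y a * y b * B a b := by
    rw [hg]
    refine Finset.sum_congr rfl fun a _ => ?_
    rw [(hB a).2, Finset.sum_mul]
    exact Finset.sum_congr rfl fun b _ => by ring
  have hpd : ∀ i j, eval z (pderiv i (y j)) = if j = i then 1 else 0 := by
    intro i j
    simp [y, pderiv_X, Pi.single_apply, apply_ite (eval z)]
  have hHB : ∀ i j, eval z (pderiv i (pderiv j h)) = eval z (B i j) + eval z (B j i) := by
    intro i j
    rw [hBh]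
    simp only [map_sum, eval_pderiv_pderiv_mul_mul (hy _) (hy _), hpd, add_mul,
      Finset.sum_add_distrib]
    simp [Finset.sum_ite_eq', ite_mul, mul_ite]
  have hhalf : (C (1 / 2) : MvPolynomial (Fin n) ℝ) * 2 = 1 := by
    rw [show (2 : MvPolynomial (Fin n) ℝ) = C 2 from rfl, ← map_mul]; norm_num
  refine exists_isSumSq_sub_mem_of_posDef (hH.smul (half_pos (one_pos (α := ℝ)))) y N ?_
  have e : h - ∑ i, ∑ j, algebraMap ℝ (MvPolynomial (Fin n) ℝ)
      (((1 / 2 : ℝ) • Matrix.of fun i j : Fin n => eval z (pderiv i (pderiv j h))) i j) *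
        (y i * y j) = ∑ i, ∑ j, y i * y j * (B i j - C (eval z (B i j))) := by
    have hsymm : ∑ i, ∑ j, C (eval z (B j i)) * (y i * y j) =
        ∑ i, ∑ j, C (eval z (B i j)) * (y i * y j) := by
      rw [Finset.sum_comm]
      exact Finset.sum_congr rfl fun i _ => Finset.sum_congr rfl fun j _ => by ring
    have hquad : ∑ i, ∑ j, algebraMap ℝ (MvPolynomial (Fin n) ℝ)
      (((1 / 2 : ℝ) • Matrix.of fun i j : Fin n => eval z (pderiv i (pderiv j h))) i j) *
        (y i * y j) = C (1 / 2) * (∑ i, ∑ j, C (eval z (B i j)) * (y i * y j) +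
          ∑ i, ∑ j, C (eval z (B j i)) * (y i * y j)) := by
      simp only [Matrix.smul_apply, Matrix.of_apply, hHB, smul_eq_mul, algebraMap_eq, map_mul,
        map_add, Finset.mul_sum, ← Finset.sum_add_distrib]
      exact Finset.sum_congr rfl fun i _ => Finset.sum_congr rfl fun j _ => by ring
    have hR : ∑ i, ∑ j, y i * y j * (B i j - C (eval z (B i j))) =
        h - ∑ i, ∑ j, C (eval z (B i j)) * (y i * y j) := by
      rw [hBh]
      simp only [← Finset.sum_sub_distrib]
      refine Finset.sum_congr rfl fun i _ => Finset.sum_congr rfl fun j _ => ?_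
      ring
    rw [hquad, hsymm, hR]
    linear_combination (-∑ i, ∑ j, C (eval z (B i j)) * (y i * y j)) * hhalf
  rw [e]
  have hymem : ∀ i, y i ∈ pointIdeal z := fun i => mem_pointIdeal.2 (hy i)
  refine sum_mem fun i _ => sum_mem fun j _ => ?_
  have := Ideal.mul_mem_mul (Ideal.mul_mem_mul (hymem i) (hymem j))
    (mem_pointIdeal.2 (show eval z (B i j - C (eval z (B i j))) = 0 by simp))
  rwa [← pow_two, ← pow_succ] at this

theorem exists_pow_prod_pointIdeal_le_support {T : Set (MvPolynomial (Fin n) ℝ)}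
    (hT : IsPreordering T) {ι : Type*} [Fintype ι] (z : ι → Fin n → ℝ)
    (G : Finset (MvPolynomial (Fin n) ℝ)) (hG : ∀ g ∈ G, g ∈ T)
    (hz : ∀ x, (∀ g ∈ G, 0 ≤ eval x g) → ∃ i, z i = x) :
    ∃ N, ∀ a ∈ (∏ i, pointIdeal (z i)) ^ N, a ∈ T := by
  have hhalf : (C (1 / 2) : MvPolynomial (Fin n) ℝ) * C (1 / 2) * 4 = 1 := by
    rw [show (4 : MvPolynomial (Fin n) ℝ) = C 4 from rfl, ← map_mul, ← map_mul]; norm_num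
  let I : Ideal (MvPolynomial (Fin n) ℝ) :=
    { carrier := {a | a ∈ T ∧ -a ∈ T}
      add_mem' := fun {a b} ha hb => ⟨hT.add ha.1 hb.1, by
        rw [neg_add]; exact hT.add ha.2 hb.2⟩
      zero_mem' := ⟨hT.zero, by rw [neg_zero]; exact hT.zero⟩
      smul_mem' := fun c a ha => by
        constructor
        · have := hT.add (hT.mul (hT.sq (C (1 / 2) * (c + 1))) ha.1)
            (hT.mul (hT.sq (C (1 / 2) * (c - 1))) ha.2)
          convert this using 1
          rw [smul_eq_mul]
          linear_combination (-c * a) * hhalf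
        · have := hT.add (hT.mul (hT.sq (C (1 / 2) * (c + 1))) ha.2)
            (hT.mul (hT.sq (C (1 / 2) * (c - 1))) ha.1)
          convert this using 1
          rw [smul_eq_mul]
          linear_combination (c * a) * hhalf }
  have hrad : ∏ i, pointIdeal (z i) ≤ I.radical := by
    intro f hf
    by_contra hcon
    obtain ⟨b, hb, hfb⟩ := hT.exists_real_point (f := f)
      (fun k hk => hcon ⟨2 * k, hT.even_pow f k, hk⟩) G hG
    obtain ⟨i, rfl⟩ := hz b hb
    exact hfb (mem_pointIdeal.1 (Ideal.prod_le_inf.trans (Finset.inf_le (Finset.mem_univ i)) hf))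
  obtain ⟨N, hN⟩ := Ideal.exists_pow_le_of_le_radical_of_fg hrad (IsNoetherian.noetherian _)
  exact ⟨N, fun a ha => (hN ha).1⟩

end PointIdeal

theorem IsPreordering.add_ideal {A : Type*} [CommRing A] {T : Set A} (hT : IsPreordering T)
    (x : A) : IsPreordering {a | ∃ t ∈ T, ∃ c, a = t + c * x} where
  add := by
    rintro _ _ ⟨t, ht, c, rfl⟩ ⟨t', ht', c', rfl⟩
    exact ⟨_, hT.add ht ht', c + c', by ring⟩
  mul := by
    rintro _ _ ⟨t, ht, c, rfl⟩ ⟨t', ht', c', rfl⟩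
    exact ⟨_, hT.mul ht ht', t * c' + c * t' + c * c' * x, by ring⟩
  sq a := ⟨a ^ 2, hT.sq a, 0, by ring⟩

open MvPolynomial

/-- Scheiderer's representation: if `K = {q ≥ 0}` is compact, `h` is nonnegative on
`K` with finitely many zeros, all interior to `K`, and the Hessian of `h` is positive
definite at each zero, then `h = σ₀ + σ₁·q` with `σ₀, σ₁` sums of squares. -/
theorem scheiderer_representation (m : ℕ) (q h : MvPolynomial (Fin m) ℝ)
    (hKcomp : IsCompact {x : Fin m → ℝ | 0 ≤ eval x q})
    (hnn : ∀ x ∈ {x : Fin m → ℝ | 0 ≤ eval x q}, 0 ≤ eval x h)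
    (hfin : {x : Fin m → ℝ | 0 ≤ eval x q ∧ eval x h = 0}.Finite)
    (hint : {x : Fin m → ℝ | 0 ≤ eval x q ∧ eval x h = 0} ⊆
        interior {x : Fin m → ℝ | 0 ≤ eval x q})
    (hhess : ∀ z ∈ {x : Fin m → ℝ | 0 ≤ eval x q ∧ eval x h = 0},
        (Matrix.of fun i j : Fin m => eval z (pderiv i (pderiv j h))).PosDef) :
    ∃ σ0 σ1 : MvPolynomial (Fin m) ℝ,
      IsSumSq σ0 ∧ IsSumSq σ1 ∧ h = σ0 + σ1 * q := by
  classical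
  have hT := isPreordering_preorderingOf q
  have hT₂ := hT.add_ideal (h ^ 2)
  have := hfin.to_subtype
  have := Fintype.ofFinite {x : Fin m → ℝ | 0 ≤ eval x q ∧ eval x h = 0}
  obtain ⟨N, hN⟩ := exists_pow_prod_pointIdeal_le_support hT₂
    (fun z : {x : Fin m → ℝ | 0 ≤ eval x q ∧ eval x h = 0} => z.1) {q, -h ^ 2}
    (by
      intro g hg
      rcases Finset.mem_insert.1 hg with rfl | hg
      · exact ⟨_, self_mem_preorderingOf _, 0, by ring⟩
      · rw [Finset.mem_singleton.1 hg]
        exact ⟨0, hT.zero, -1, by ring⟩)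
    (by
      intro x hx
      have h1 := hx q (by simp)
      have h2 := hx (-h ^ 2) (by simp)
      rw [map_neg, map_pow] at h2
      exact ⟨⟨x, h1, pow_eq_zero_iff two_ne_zero |>.1 (by linarith [sq_nonneg (eval x h)])⟩, rfl⟩)
  have hcop : Pairwise (Function.onFun IsCoprime
      fun z : {x : Fin m → ℝ | 0 ≤ eval x q ∧ eval x h = 0} => pointIdeal z.1 ^ N) :=
    fun z w hzw => (isCoprime_pointIdeal (Subtype.coe_ne_coe.2 hzw)).pow
  obtain ⟨σ, hσ, hmem⟩ := exists_isSumSq_sub_mem_iInf hcop (h := h) fun z =>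
    exists_isSumSq_sub_mem_pointIdeal_pow z.2.2
      (Filter.mem_of_superset (mem_interior_iff_mem_nhds.1 (hint z.2)) hnn) (hhess z.1 z.2) N
  have hprod := Ideal.prod_eq_iInf_of_pairwise_isCoprime (s := Finset.univ)
    (hcop.set_pairwise _)
  simp only [Finset.mem_univ, iInf_pos, Finset.prod_pow] at hprod
  rw [← hprod] at hmem
  obtain ⟨t, ht, c, htc⟩ := hN _ hmem
  obtain ⟨σ0, hσ0, σ1, hσ1, he⟩ := mem_preorderingOf_of_eq_add_mul_sq (c := c) hKcomp hnn
    (hT.add (hT.isSumSq hσ) ht) (by linear_combination htc)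
  exact ⟨σ0, σ1, hσ0, hσ1, he⟩
end
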